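/- arXiv:2302.13478 — 4 statements merged into one kernel-verified Lean document; each statement's English description precedes it below -/
import Mathlib

section
/- If ℓ is not congruent to −m modulo 3, then the polynomial X^(2q^ℓ+1) + X + a has exactly 3 roots in F_{q³}. -/
open Polynomial

local notation "K" => AlgebraicClosure (ZMod 2)

/-!
Let `σ` be the `q ^ ℓ`-power map, so that the equation reads `x σ(x)² + x + a = 0`, and let `r`,
`s`, `r + s` be the roots of `X³ + X + a`. The trace condition says that Berlekamp's resolvent of
this cubic splits over `𝔽_q`, so the `q`-power map permutes the three roots evenly: it fixes them or
rotates them, and in both cases they lie in `𝔽_{q³}`.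

Let `t` be the Möbius coordinate of `x` in which the roots are `0`, `1`, `∞`. In this coordinate
`x y² + x + a = 0` becomes `t(x) = t(y)²`. Put `k = m ℓ + 1`.
* If `σ` fixes the roots, the equation becomes `t ^ 2 ^ k = t`. As `k` is prime to `3 m`, this and
  `x ∈ 𝔽_{q³}` force `t ∈ {0, 1, ∞}`, so the solutions are the roots of the cubic.
* If `σ` rotates the roots, the equation becomes `t ^ 2 ^ k = 1 + 1 / t`. The right-hand side has
  order three as a function of `t`, so `t ^ 2 ^ (3 k) = t`, and `gcd (3 k, 3 m) = 3` gives `t ∈ 𝔽₈`.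
  Three such `t` exist, and `a ≠ 1` ensures that none of them is the coordinate `r / (r + s)` of
  `x = ∞`.
-/

open Function

/-- `r` and `s` are two distinct roots of `X³ + X + a` with `a ≠ 0`. In characteristic two the third
root is then `r + s`. -/
structure IsCubicRootPair {F : Type*} [Field F] (a r s : F) : Prop where
  coeff_ne_zero : a ≠ 0
  left_root : r ^ 3 + r + a = 0
  right_root : s ^ 3 + s + a = 0
  ne : r ≠ s

/-- The cyclic sum of ratios of the roots `r`, `s`, `r + s`; it is the root of Berlekamp's quadratic
resolvent and tells even permutations of the roots from odd ones. -/
def orientation {F : Type*} [Field F] (r s : F) : F := r / (r + s) + s / r + (r + s) / s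

/-- The Möbius coordinate sending the roots `r`, `s`, `r + s` to `0`, `1`, `∞`. At `x = r + s` it
takes the junk value `0`. -/
def rootCoordinate {F : Type*} [Field F] (r s x : F) : F := r * (x + r) / ((r + s) * (x + (r + s)))

theorem map_orientation {F E : Type*} [Field F] [Field E] (σ : F →+* E) (r s : F) :
    σ (orientation r s) = orientation (σ r) (σ s) := by
  simp only [orientation, map_add, map_div₀]

theorem map_rootCoordinate {F E : Type*} [Field F] [Field E] (σ : F →+* E) (r s x : F) :
    σ (rootCoordinate r s x) = rootCoordinate (σ r) (σ s) (σ x) := by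
  simp only [rootCoordinate, map_div₀, map_mul, map_add]

theorem add_add_cancel_of_charTwo {R : Type*} [Ring R] [CharP R 2] (r s : R) :
    s + (r + s) = r := by
  rw [add_comm r, CharTwo.add_cancel_left]

theorem orientation_rotate {F : Type*} [Field F] [CharP F 2] (r s : F) :
    orientation s (r + s) = orientation r s := by
  simp only [orientation, add_add_cancel_of_charTwo]
  ring

theorem rootCoordinate_left {F : Type*} [Field F] [CharP F 2] (r s : F) :
    rootCoordinate r s r = 0 := by
  simp [rootCoordinate, CharTwo.add_self_eq_zero]

theorem eq_of_mul_sq_add_eq_zero {F : Type*} [Field F] [CharP F 2] {a x y : F}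
    (ha : a ≠ 0) (hx : x ^ 3 + x + a = 0) (hxy : x * y ^ 2 + x + a = 0) : y = x := by
  have hx0 : x ≠ 0 := by
    rintro rfl
    exact ha (by simpa using hx)
  have squares : x * y ^ 2 = x * x ^ 2 := by linear_combination hxy - hx
  exact CharTwo.sq_inj.1 (mul_left_cancel₀ hx0 squares)

namespace IsCubicRootPair

variable {F : Type*} [Field F] {a r s : F}

theorem left_ne_zero (h : IsCubicRootPair a r s) : r ≠ 0 := by
  rintro rfl
  exact h.coeff_ne_zero (by simpa using h.left_root)

theorem symm (h : IsCubicRootPair a r s) : IsCubicRootPair a s r :=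
  ⟨h.coeff_ne_zero, h.right_root, h.left_root, h.ne.symm⟩

theorem right_ne_zero (h : IsCubicRootPair a r s) : s ≠ 0 := h.symm.left_ne_zero

theorem map {σ : F →+* F} (h : IsCubicRootPair a r s) (ha : σ a = a) :
    IsCubicRootPair a (σ r) (σ s) where
  coeff_ne_zero := h.coeff_ne_zero
  left_root := by simpa [ha] using congrArg σ h.left_root
  right_root := by simpa [ha] using congrArg σ h.right_root
  ne := σ.injective.ne h.ne

variable [CharP F 2]

theorem sq_add_mul_add_sq (h : IsCubicRootPair a r s) : r ^ 2 + r * s + s ^ 2 = 1 := by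
  have factored : (r - s) * (r ^ 2 + r * s + s ^ 2 + 1) = 0 := by
    linear_combination h.left_root - h.right_root
  exact CharTwo.add_eq_zero.1 ((mul_eq_zero.1 factored).resolve_left (sub_ne_zero.2 h.ne))

theorem coeff_eq (h : IsCubicRootPair a r s) : a = r * s * (r + s) := by
  linear_combination -r * h.sq_add_mul_add_sq + h.left_root -
    r * CharTwo.two_eq_zero (R := F)

theorem add_ne_zero (h : IsCubicRootPair a r s) : r + s ≠ 0 :=
  fun hrs => h.ne (CharTwo.add_eq_zero.1 hrs)

theorem rotate (h : IsCubicRootPair a r s) : IsCubicRootPair a s (r + s) where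
  coeff_ne_zero := h.coeff_ne_zero
  left_root := h.right_root
  right_root := by grind [h.left_root, h.right_root, h.sq_add_mul_add_sq]
  ne := by simpa using h.left_ne_zero

theorem reflect (h : IsCubicRootPair a r s) : IsCubicRootPair a r (r + s) := by
  simpa only [add_comm] using h.symm.rotate

theorem root_iff (h : IsCubicRootPair a r s) {x : F} :
    x ^ 3 + x + a = 0 ↔ x = r ∨ x = s ∨ x = r + s := by
  have factored : x ^ 3 + x + a = (x - r) * ((x - s) * (x - (r + s))) := by
    grind [h.sq_add_mul_add_sq, h.coeff_eq]
  simp only [factored, mul_eq_zero, sub_eq_zero]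

theorem ncard_roots (h : IsCubicRootPair a r s) : {x : F | x ^ 3 + x + a = 0}.ncard = 3 :=
  Set.ncard_eq_three.2 ⟨r, s, r + s, h.ne, h.reflect.ne, h.rotate.ne, Set.ext fun _ => h.root_iff⟩

theorem orientation_swap (h : IsCubicRootPair a r s) : orientation s r = orientation r s + 1 := by
  have hr := h.left_ne_zero
  have hs := h.right_ne_zero
  have hrs := h.add_ne_zero
  unfold orientation
  rw [add_comm s r]
  field_simp
  grind

theorem orientation_add_inv_add_sq (h : IsCubicRootPair a r s) :
    (orientation r s + a⁻¹) + (orientation r s + a⁻¹) ^ 2 = 1 + a⁻¹ := by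
  have hr := h.left_ne_zero
  have hs := h.right_ne_zero
  have hrs := h.add_ne_zero
  have ha := h.coeff_eq
  have ha0 := h.coeff_ne_zero
  have hq := h.sq_add_mul_add_sq
  have common_denominator : orientation r s = (r ^ 2 * s + (r + s)) * a⁻¹ := by
    rw [ha]
    unfold orientation
    field_simp
    grind
  rw [common_denominator]
  field_simp
  grind

theorem eq_rotation_of_orientation_eq {r' s' : F} (h : IsCubicRootPair a r s)
    (h' : IsCubicRootPair a r' s') (ho : orientation r' s' = orientation r s) :
    (r' = r ∧ s' = s) ∨ (r' = s ∧ s' = r + s) ∨ (r' = r + s ∧ s' = r) := by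
  have rotate_twice : orientation (r + s) r = orientation r s := by
    simpa only [add_add_cancel_of_charTwo, orientation_rotate] using orientation_rotate s (r + s)
  have swap := h.orientation_swap
  have swap_rotate : orientation (r + s) s = orientation r s + 1 := by
    rw [h.rotate.orientation_swap, orientation_rotate]
  have swap_rotate_twice : orientation r (r + s) = orientation r s + 1 := by
    rw [h.reflect.symm.orientation_swap, rotate_twice]
  have hne := h'.ne
  rcases h.root_iff.1 h'.left_root with rfl | rfl | rfl <;>
    rcases h.root_iff.1 h'.right_root with rfl | rfl | rfl <;> simp_all

theorem injOn_rootCoordinate (h : IsCubicRootPair a r s) :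
    Set.InjOn (rootCoordinate r s) {r + s}ᶜ := by
  intro x hx y hy hxy
  have hx' : x + (r + s) ≠ 0 := mt CharTwo.add_eq_zero.1 hx
  have hy' : y + (r + s) ≠ 0 := mt CharTwo.add_eq_zero.1 hy
  have hr := h.left_ne_zero
  have hs := h.right_ne_zero
  have hrs := h.add_ne_zero
  simp only [rootCoordinate] at hxy
  rw [div_eq_div_iff (by positivity) (by positivity)] at hxy
  have factored : r * s * (r + s) * (x - y) = 0 := by
    linear_combination hxy
  exact sub_eq_zero.1 ((mul_eq_zero.1 factored).resolve_left (by positivity))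

theorem rootCoordinate_right (h : IsCubicRootPair a r s) : rootCoordinate r s s = 1 := by
  have hr := h.left_ne_zero
  have hrs := h.add_ne_zero
  rw [rootCoordinate, add_comm s r, add_comm r s, CharTwo.add_cancel_left, add_comm s r, mul_comm,
    div_self (mul_ne_zero hrs hr)]

theorem rootCoordinate_rotate {x : F} (h : IsCubicRootPair a r s) (hx : x ≠ r) :
    rootCoordinate s (r + s) x = 1 + (rootCoordinate r s x)⁻¹ := by
  have hr := h.left_ne_zero
  have hxr : x + r ≠ 0 := mt CharTwo.add_eq_zero.1 hx
  rw [rootCoordinate, rootCoordinate, add_add_cancel_of_charTwo, inv_div]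
  field_simp
  grind

theorem exists_rootCoordinate_eq {t : F} (h : IsCubicRootPair a r s) (ht : t ≠ r / (r + s)) :
    ∃ x, x ≠ r + s ∧ rootCoordinate r s x = t := by
  have hr := h.left_ne_zero
  have hs := h.right_ne_zero
  have hrs := h.add_ne_zero
  have hd : t * (r + s) + r ≠ 0 := by
    rwa [Ne, CharTwo.add_eq_zero, ← eq_div_iff hrs]
  have hsub : (r ^ 2 + t * (r + s) ^ 2) / (t * (r + s) + r) + (r + s) =
      r * s / (t * (r + s) + r) := by
    field_simp
    grind
  have hadd : (r ^ 2 + t * (r + s) ^ 2) / (t * (r + s) + r) + r =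
      t * (r + s) * s / (t * (r + s) + r) := by
    field_simp
    grind
  refine ⟨(r ^ 2 + t * (r + s) ^ 2) / (t * (r + s) + r), ?_, ?_⟩
  · rw [Ne, ← CharTwo.add_eq_zero, hsub]
    positivity
  · rw [rootCoordinate, hsub, hadd]
    field_simp

theorem mul_sq_add_eq_zero_iff {x y : F} (h : IsCubicRootPair a r s) (hx : x ≠ r + s)
    (hy : y ≠ r + s) :
    x * y ^ 2 + x + a = 0 ↔ rootCoordinate r s x = rootCoordinate r s y ^ 2 := by
  have hx' : x + (r + s) ≠ 0 := mt CharTwo.add_eq_zero.1 hx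
  have hy' : y + (r + s) ≠ 0 := mt CharTwo.add_eq_zero.1 hy
  have hr := h.left_ne_zero
  have hs := h.right_ne_zero
  have hrs := h.add_ne_zero
  have hne : r * s * (r + s) ≠ 0 := by positivity
  have cross : r * (x + r) * ((r + s) * (y + (r + s))) ^ 2 -
      (r * (y + r)) ^ 2 * ((r + s) * (x + (r + s))) =
      r * s * (r + s) * (x * y ^ 2 + x + a) := by
    grind [h.coeff_eq, h.sq_add_mul_add_sq]
  rw [rootCoordinate, rootCoordinate, div_pow, div_eq_div_iff (by positivity) (by positivity),
    ← sub_eq_zero (a := r * _ * _), cross, mul_eq_zero, or_iff_right hne]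

section Endomorphism

variable {σ : F →+* F}

theorem map_eq_rotation (h : IsCubicRootPair a r s) (ha : σ a = a)
    (ho : σ (orientation r s) = orientation r s) :
    (σ r = r ∧ σ s = s) ∨ (σ r = s ∧ σ s = r + s) ∨ (σ r = r + s ∧ σ s = r) :=
  h.eq_rotation_of_orientation_eq (h.map ha) (by rw [← map_orientation, ho])

theorem isPeriodicPt_three (h : IsCubicRootPair a r s) (ha : σ a = a)
    (ho : σ (orientation r s) = orientation r s) :
    IsPeriodicPt σ 3 r ∧ IsPeriodicPt σ 3 s := by
  have third : r + s + r = s := by rw [add_comm, CharTwo.add_cancel_left]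
  rcases h.map_eq_rotation ha ho with ⟨hr, hs⟩ | ⟨hr, hs⟩ | ⟨hr, hs⟩ <;>
    simp [IsPeriodicPt, IsFixedPt, hr, hs, add_add_cancel_of_charTwo, third]

theorem map_root_eq_self {x : F} (h : IsCubicRootPair a r s) (hr : σ r = r) (hs : σ s = s)
    (hx : x ^ 3 + x + a = 0) : σ x = x := by
  rcases h.root_iff.1 hx with rfl | rfl | rfl
  · exact hr
  · exact hs
  · rw [map_add, hr, hs]

theorem map_rootCoordinate_eq_self_iff {x : F} (h : IsCubicRootPair a r s) (hr : σ r = r)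
    (hs : σ s = s) (hx : x ≠ r + s) :
    σ (rootCoordinate r s x) = rootCoordinate r s x ↔ σ x = x := by
  have hσx : σ x ≠ r + s := by
    simpa only [map_add, hr, hs] using σ.injective.ne hx
  rw [map_rootCoordinate, hr, hs, h.injOn_rootCoordinate.eq_iff hσx hx]

theorem mul_sq_add_eq_zero_iff_of_fixed {x : F} (h : IsCubicRootPair a r s) (hr : σ r = r)
    (hs : σ s = s) (hx : x ≠ r + s) :
    x * σ x ^ 2 + x + a = 0 ↔ σ (rootCoordinate r s x) ^ 2 = rootCoordinate r s x := by
  have hσx : σ x ≠ r + s := by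
    simpa only [map_add, hr, hs] using σ.injective.ne hx
  rw [h.mul_sq_add_eq_zero_iff hx hσx, map_rootCoordinate, hr, hs, eq_comm]

theorem mul_sq_add_eq_zero_iff_of_rotated {x : F} (h : IsCubicRootPair a r s) (hr : σ r = s)
    (hs : σ s = r + s) (hx : x ≠ r + s) (hxs : x ≠ s) :
    x * σ x ^ 2 + x + a = 0 ↔ σ (rootCoordinate r s x) ^ 2 = 1 + (rootCoordinate r s x)⁻¹ := by
  have hσxr : σ x ≠ r := by
    simpa only [map_add, hr, hs, add_add_cancel_of_charTwo] using σ.injective.ne hx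
  have hσxc : σ x ≠ r + s := by
    simpa only [hs] using σ.injective.ne hxs
  rw [h.mul_sq_add_eq_zero_iff hx hσxc, map_rootCoordinate, hr, hs, h.rootCoordinate_rotate hσxr,
    CharTwo.add_sq, one_pow, inv_pow, add_right_inj, inv_inj, eq_comm]

theorem not_root_of_rotated {x : F} (h : IsCubicRootPair a r s) (hr : σ r = s)
    (hs : σ s = r + s) (hx : x * σ x ^ 2 + x + a = 0) : x ^ 3 + x + a ≠ 0 := by
  intro hroot
  have fixed : σ x = x := eq_of_mul_sq_add_eq_zero h.coeff_ne_zero hroot hx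
  rcases h.root_iff.1 hroot with rfl | rfl | rfl
  · exact h.ne (fixed.symm.trans hr)
  · exact h.rotate.ne (fixed.symm.trans hs)
  · rw [map_add, hr, hs, add_add_cancel_of_charTwo] at fixed
    exact h.reflect.ne fixed

end Endomorphism

end IsCubicRootPair

section Frobenius

section ExpChar

variable {R : Type*} [CommSemiring R] {p : ℕ} [ExpChar R p] {m n : ℕ} {x : R}

theorem isPeriodicPt_frobenius_iff :
    IsPeriodicPt (frobenius R p) n x ↔ iterateFrobenius R p n x = x := by
  rw [IsPeriodicPt, IsFixedPt, coe_iterateFrobenius]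

theorem isPeriodicPt_iterateFrobenius_iff :
    IsPeriodicPt (iterateFrobenius R p m) n x ↔ iterateFrobenius R p (m * n) x = x := by
  rw [IsPeriodicPt, IsFixedPt, coe_iterateFrobenius, coe_iterateFrobenius, iterate_mul]

theorem iterateFrobenius_pow_char (n : ℕ) (x : R) :
    iterateFrobenius R p n x ^ p = iterateFrobenius R p (n + 1) x := by
  rw [iterateFrobenius_def, iterateFrobenius_def, ← pow_mul, ← pow_succ]

end ExpChar

variable {F : Type*} [Field F] [CharP F 2]

theorem sum_range_add_sq_pow_two_pow (x : F) (m : ℕ) :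
    ∑ i ∈ Finset.range m, (x + x ^ 2) ^ 2 ^ i = x ^ 2 ^ m + x := by
  have telescoping (i : ℕ) : (x + x ^ 2) ^ 2 ^ i = x ^ 2 ^ (i + 1) - x ^ 2 ^ i := by
    rw [add_pow_char_pow, ← pow_mul, ← pow_succ', CharTwo.sub_eq_add, add_comm]
  rw [Finset.sum_congr rfl fun i _ => telescoping i, Finset.sum_range_sub (fun i => x ^ 2 ^ i),
    pow_zero, pow_one, CharTwo.sub_eq_add]

theorem IsCubicRootPair.iterateFrobenius_orientation {a r s : F} {m : ℕ}
    (h : IsCubicRootPair a r s) (ha : iterateFrobenius F 2 m a = a)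
    (htr : ∑ i ∈ Finset.range m, a⁻¹ ^ 2 ^ i = (m : F)) :
    iterateFrobenius F 2 m (orientation r s) = orientation r s := by
  have trace_zero : ∑ i ∈ Finset.range m, (1 + a⁻¹) ^ 2 ^ i = 0 := by
    simp only [add_pow_char_pow, one_pow, Finset.sum_add_distrib, Finset.sum_const,
      Finset.card_range, nsmul_one, htr, CharTwo.add_self_eq_zero]
  rw [← h.orientation_add_inv_add_sq, sum_range_add_sq_pow_two_pow, CharTwo.add_eq_zero,
    ← iterateFrobenius_def, map_add, map_inv₀, ha] at trace_zero
  exact add_right_cancel trace_zero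

theorem eq_zero_or_eq_one_of_iterateFrobenius_eq {m ℓ : ℕ} {t : F} (h3 : ¬ 3 ∣ m * ℓ + 1)
    (hm : iterateFrobenius F 2 (m * 3) t = t)
    (hk : iterateFrobenius F 2 (m * ℓ + 1) t = t) : t = 0 ∨ t = 1 := by
  have coprime : Nat.Coprime (m * 3) (m * ℓ + 1) :=
    Nat.Coprime.mul_left (by simp) ((Nat.Prime.coprime_iff_not_dvd Nat.prime_three).2 h3)
  have period := (isPeriodicPt_frobenius_iff.2 hm).gcd (isPeriodicPt_frobenius_iff.2 hk)
  rw [coprime.gcd_eq_one, isPeriodicPt_frobenius_iff, iterateFrobenius_def, pow_one, sq] at period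
  exact IsIdempotentElem.iff_eq_zero_or_one.1 period

theorem isPeriodicPt_three_of_map_eq_one_add_inv {τ : F →+* F} {t : F} (h : τ t = 1 + t⁻¹) :
    IsPeriodicPt τ 3 t := by
  have ht0 : t ≠ 0 := by
    rintro rfl
    simp at h
  have ht1 : t + 1 ≠ 0 := by
    intro ht
    obtain rfl := CharTwo.add_eq_zero.1 ht
    simp [CharTwo.add_self_eq_zero] at h
  have second : τ (1 + t⁻¹) = (1 + t)⁻¹ := by
    rw [map_add, map_one, map_inv₀, h]
    grind
  change τ (τ (τ t)) = t
  rw [h, second, map_inv₀, map_add, map_one, h]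
  grind

theorem pow_eight_eq_self_of_iterateFrobenius_eq {m ℓ : ℕ} {t : F}
    (hm : iterateFrobenius F 2 (m * 3) t = t)
    (hk : iterateFrobenius F 2 (m * ℓ + 1) t = 1 + t⁻¹) : t ^ 8 = t := by
  have hk3 : iterateFrobenius F 2 ((m * ℓ + 1) * 3) t = t :=
    isPeriodicPt_iterateFrobenius_iff.1 (isPeriodicPt_three_of_map_eq_one_add_inv hk)
  have coprime : Nat.Coprime m (m * ℓ + 1) := by simp
  have period := (isPeriodicPt_frobenius_iff.2 hm).gcd (isPeriodicPt_frobenius_iff.2 hk3)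
  rwa [Nat.gcd_mul_right, coprime.gcd_eq_one, one_mul, isPeriodicPt_frobenius_iff,
    iterateFrobenius_def] at period

end Frobenius

section EightElements

variable {F : Type*} [Field F] [CharP F 2]

/-- The elements of `𝔽₈` on which the `2 ^ k`-power map agrees with the Möbius transformation
`t ↦ 1 + 1 / t` of order three. The junk value `0⁻¹ = 0` does not put `0` into this set. -/
def twistedPoints (F : Type*) [Field F] [CharP F 2] (k : ℕ) : Set F :=
  {t | t ^ 8 = t ∧ iterateFrobenius F 2 k t = 1 + t⁻¹}

theorem iterateFrobenius_eq_pow_mod_three {t : F} (h8 : t ^ 8 = t) (k : ℕ) :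
    iterateFrobenius F 2 k t = t ^ 2 ^ (k % 3) := by
  have period : IsPeriodicPt (frobenius F 2) 3 t := isPeriodicPt_frobenius_iff.2 h8
  rw [coe_iterateFrobenius, ← period.iterate_mod_apply k, iterate_frobenius]

theorem ne_zero_of_mem_twistedPoints {k : ℕ} {t : F} (ht : t ∈ twistedPoints F k) : t ≠ 0 := by
  rintro rfl
  simpa using ht.2

theorem ne_one_of_mem_twistedPoints {k : ℕ} {t : F} (ht : t ∈ twistedPoints F k) : t ≠ 1 := by
  rintro rfl
  simpa [CharTwo.add_self_eq_zero] using ht.2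

theorem mem_twistedPoints_iff_of_mod_eq_one {k : ℕ} (hk : k % 3 = 1) {t : F} :
    t ∈ twistedPoints F k ↔ t ^ 3 + t + 1 = 0 := by
  have reduce (h8 : t ^ 8 = t) : iterateFrobenius F 2 k t = t ^ 2 := by
    rw [iterateFrobenius_eq_pow_mod_three h8, hk]
    norm_num
  constructor
  · rintro ⟨h8, h⟩
    rw [reduce h8] at h
    grind
  · intro h
    have h8 : t ^ 8 = t := by grind
    exact ⟨h8, by rw [reduce h8]; grind⟩

theorem mem_twistedPoints_iff_of_mod_eq_two {k : ℕ} (hk : k % 3 = 2) {t : F} :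
    t ∈ twistedPoints F k ↔ (t + 1) ^ 3 + (t + 1) + 1 = 0 := by
  have reduce (h8 : t ^ 8 = t) : iterateFrobenius F 2 k t = t ^ 4 := by
    rw [iterateFrobenius_eq_pow_mod_three h8, hk]
    norm_num
  constructor
  · rintro ⟨h8, h⟩
    rw [reduce h8] at h
    grind
  · intro h
    have h8 : t ^ 8 = t := by grind
    exact ⟨h8, by rw [reduce h8]; grind⟩

theorem ncard_twistedPoints {k : ℕ} {u v : F} (h : IsCubicRootPair 1 u v) (hk : ¬ 3 ∣ k) :
    (twistedPoints F k).ncard = 3 := by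
  rcases (by lia : k % 3 = 1 ∨ k % 3 = 2) with hk | hk
  · have points : twistedPoints F k = {t | t ^ 3 + t + 1 = 0} :=
      Set.ext fun _ => mem_twistedPoints_iff_of_mod_eq_one hk
    rw [points, h.ncard_roots]
  · have points : twistedPoints F k = (· + 1) ⁻¹' {t | t ^ 3 + t + 1 = 0} :=
      Set.ext fun _ => mem_twistedPoints_iff_of_mod_eq_two hk
    rw [points, Set.ncard_preimage_of_injective_subset_range (add_left_injective 1)
      fun t _ => ⟨t - 1, sub_add_cancel t 1⟩, h.ncard_roots]

theorem cubic_of_mem_twistedPoints {k : ℕ} {t : F} (ht : t ∈ twistedPoints F k) :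
    (t ^ 2 + t) ^ 3 + (t ^ 2 + t) + 1 = 0 := by
  have factored : t * ((t - 1) * ((t ^ 2 + t) ^ 3 + (t ^ 2 + t) + 1)) = 0 := by
    grind [ht.1]
  simpa [ne_zero_of_mem_twistedPoints ht, sub_eq_zero, ne_one_of_mem_twistedPoints ht]
    using factored

theorem IsCubicRootPair.coeff_sq_mul_eq {a r s : F} (h : IsCubicRootPair a r s) :
    a ^ 2 * ((r / (r + s)) ^ 2 + r / (r + s) + 1) ^ 3 = ((r / (r + s)) ^ 2 + r / (r + s)) ^ 2 := by
  have hrs := h.add_ne_zero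
  have norm : (r / (r + s)) ^ 2 + r / (r + s) + 1 = 1 / (r + s) ^ 2 := by
    field_simp
    grind [h.sq_add_mul_add_sq]
  have prod : (r / (r + s)) ^ 2 + r / (r + s) = r * s / (r + s) ^ 2 := by
    field_simp
    grind
  rw [norm, prod, h.coeff_eq]
  field_simp

theorem IsCubicRootPair.ne_div_add_of_mem_twistedPoints {a r s t : F} {k : ℕ}
    (h : IsCubicRootPair a r s) (ha : a ≠ 1) (ht : t ∈ twistedPoints F k) : t ≠ r / (r + s) := by
  rintro rfl
  have cubic := cubic_of_mem_twistedPoints ht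
  have invariant := h.coeff_sq_mul_eq
  generalize (r / (r + s)) ^ 2 + r / (r + s) = u at cubic invariant
  have hu : u ≠ 0 := by
    rintro rfl
    simp at cubic
  have cube : (u + 1) ^ 3 = u ^ 2 := by grind
  rw [cube, mul_eq_right₀ (pow_ne_zero 2 hu), ← one_pow 2, CharTwo.sq_inj] at invariant
  exact ha invariant

end EightElements

section TwistedRoots

variable {F : Type*} [Field F] [CharP F 2]

/-- The roots of `X ^ (2 q ^ ℓ + 1) + X + a` in the fixed field `𝔽_{q³}` of the `q³`-power map,
where `q = 2 ^ m`; the monomial `X ^ (2 q ^ ℓ + 1)` is written as `X · σ(X)²` with `σ` the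
`q ^ ℓ`-power map. -/
def twistedRoots (m ℓ : ℕ) (a : F) : Set F :=
  {x | iterateFrobenius F 2 (m * 3) x = x ∧ x * iterateFrobenius F 2 (m * ℓ) x ^ 2 + x + a = 0}

theorem setOf_roots_eq_twistedRoots (m ℓ : ℕ) (a : F) :
    {x : F | x ^ (2 ^ m) ^ 3 = x ∧ x ^ (2 * (2 ^ m) ^ ℓ + 1) + x + a = 0} = twistedRoots m ℓ a := by
  ext x
  simp only [twistedRoots, Set.mem_ofPred_eq, iterateFrobenius_def, ← pow_mul, pow_succ' x,
    mul_comm 2]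

namespace IsCubicRootPair

variable {m ℓ : ℕ} {a r s : F}

theorem twistedRoots_eq_of_fixed (h : IsCubicRootPair a r s)
    (hr : iterateFrobenius F 2 (m * ℓ) r = r) (hs : iterateFrobenius F 2 (m * ℓ) s = s)
    (hr3 : iterateFrobenius F 2 (m * 3) r = r) (hs3 : iterateFrobenius F 2 (m * 3) s = s)
    (h3 : ¬ 3 ∣ m * ℓ + 1) : twistedRoots m ℓ a = {x | x ^ 3 + x + a = 0} := by
  ext x
  constructor
  · rintro ⟨hx3, hx⟩
    refine h.root_iff.2 ?_
    by_cases hxc : x = r + s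
    · exact Or.inr (Or.inr hxc)
    rw [h.mul_sq_add_eq_zero_iff_of_fixed hr hs hxc, iterateFrobenius_pow_char] at hx
    have ht3 := (h.map_rootCoordinate_eq_self_iff hr3 hs3 hxc).2 hx3
    rcases eq_zero_or_eq_one_of_iterateFrobenius_eq h3 ht3 hx with ht | ht
    · rw [← rootCoordinate_left r s] at ht
      exact Or.inl (h.injOn_rootCoordinate hxc h.reflect.ne ht)
    · rw [← h.rootCoordinate_right] at ht
      exact Or.inr (Or.inl (h.injOn_rootCoordinate hxc h.rotate.ne ht))
  · intro hx
    refine ⟨h.map_root_eq_self hr3 hs3 hx, ?_⟩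
    rw [h.map_root_eq_self hr hs hx]
    linear_combination hx.out

theorem bijOn_rootCoordinate_of_rotated (h : IsCubicRootPair a r s)
    (hr : iterateFrobenius F 2 (m * ℓ) r = s) (hs : iterateFrobenius F 2 (m * ℓ) s = r + s)
    (hr3 : iterateFrobenius F 2 (m * 3) r = r) (hs3 : iterateFrobenius F 2 (m * 3) s = s)
    (ha : a ≠ 1) :
    Set.BijOn (rootCoordinate r s) (twistedRoots m ℓ a) (twistedPoints F (m * ℓ + 1)) := by
  have not_root {x : F} (hx : x ∈ twistedRoots m ℓ a) : x ≠ s ∧ x ≠ r + s := by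
    have hroots := mt h.root_iff.2 (h.not_root_of_rotated hr hs hx.2)
    tauto
  refine ⟨fun x hx => ?_, h.injOn_rootCoordinate.mono fun x hx => (not_root hx).2, fun t ht => ?_⟩
  · obtain ⟨hxs, hxc⟩ := not_root hx
    have ht := (h.mul_sq_add_eq_zero_iff_of_rotated hr hs hxc hxs).1 hx.2
    have ht3 := (h.map_rootCoordinate_eq_self_iff hr3 hs3 hxc).2 hx.1
    rw [iterateFrobenius_pow_char] at ht
    exact ⟨pow_eight_eq_self_of_iterateFrobenius_eq ht3 ht, ht⟩
  · obtain ⟨x, hxc, rfl⟩ := h.exists_rootCoordinate_eq (h.ne_div_add_of_mem_twistedPoints ha ht)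
    have hxs : x ≠ s := by
      rintro rfl
      exact ne_one_of_mem_twistedPoints ht h.rootCoordinate_right
    have ht3 : iterateFrobenius F 2 (m * 3) (rootCoordinate r s x) = rootCoordinate r s x := by
      rw [iterateFrobenius_eq_pow_mod_three ht.1, Nat.mul_mod_left, pow_zero, pow_one]
    refine ⟨x, ⟨(h.map_rootCoordinate_eq_self_iff hr3 hs3 hxc).1 ht3, ?_⟩, rfl⟩
    rw [h.mul_sq_add_eq_zero_iff_of_rotated hr hs hxc hxs, iterateFrobenius_pow_char, ht.2]

theorem ncard_twistedRoots {u v : F} (h : IsCubicRootPair a r s) (h₁ : IsCubicRootPair 1 u v)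
    (ha : iterateFrobenius F 2 m a = a) (ha1 : a ≠ 1)
    (htr : ∑ i ∈ Finset.range m, a⁻¹ ^ 2 ^ i = (m : F)) (h3 : ¬ 3 ∣ m * ℓ + 1) :
    (twistedRoots m ℓ a).ncard = 3 := by
  have ho := h.iterateFrobenius_orientation ha htr
  obtain ⟨hr3, hs3⟩ := h.isPeriodicPt_three ha ho
  rw [isPeriodicPt_iterateFrobenius_iff] at hr3 hs3
  have fixed {x : F} (hx : iterateFrobenius F 2 m x = x) : iterateFrobenius F 2 (m * ℓ) x = x :=
    isPeriodicPt_iterateFrobenius_iff.1 (IsFixedPt.isPeriodicPt hx ℓ)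
  rcases h.map_eq_rotation (fixed ha) (fixed ho) with ⟨hr, hs⟩ | ⟨hr, hs⟩ | ⟨hr, hs⟩
  · rw [h.twistedRoots_eq_of_fixed hr hs hr3 hs3 h3, h.ncard_roots]
  · rw [(h.bijOn_rootCoordinate_of_rotated hr hs hr3 hs3 ha1).ncard_eq, ncard_twistedPoints h₁ h3]
  · have hc : iterateFrobenius F 2 (m * ℓ) (r + s) = r + (r + s) := by
      rw [map_add, hr, hs, add_comm]
    have hc3 : iterateFrobenius F 2 (m * 3) (r + s) = r + s := by rw [map_add, hr3, hs3]
    rw [(h.reflect.bijOn_rootCoordinate_of_rotated hr hc hr3 hc3 ha1).ncard_eq,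
      ncard_twistedPoints h₁ h3]

end IsCubicRootPair

theorem exists_isCubicRootPair [IsAlgClosed F] {a : F} (ha : a ≠ 0) :
    ∃ r s, IsCubicRootPair a r s := by
  have hcubic : (X ^ 3 + (X + C a) : F[X]).degree ≠ 0 := by
    rw [show (X ^ 3 + (X + C a) : F[X]).degree = 3 by compute_degree!]
    decide
  obtain ⟨r, hr⟩ := IsAlgClosed.exists_root _ hcubic
  have hquad : (X ^ 2 + (C r * X + C (r ^ 2 + 1)) : F[X]).degree ≠ 0 := by
    rw [show (X ^ 2 + (C r * X + C (r ^ 2 + 1)) : F[X]).degree = 2 by compute_degree!]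
    decide
  obtain ⟨s, hs⟩ := IsAlgClosed.exists_root _ hquad
  replace hr : r ^ 3 + (r + a) = 0 := by simpa using hr
  replace hs : s ^ 2 + (r * s + (r ^ 2 + 1)) = 0 := by simpa using hs
  refine ⟨r, s, ha, by rw [add_assoc, hr], by grind, ?_⟩
  rintro rfl
  obtain rfl : r = 1 := CharTwo.sq_inj.1 (by grind)
  exact ha (by grind)

theorem roots_count_eq_three_of_not_cong_general [IsAlgClosed F] (m ℓ q : ℕ)
    (hq : q = 2 ^ m) (a : F) (haq : a ^ q = a) (ha2 : a ^ 2 ≠ a)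
    (htr : ∑ i ∈ Finset.range m, a⁻¹ ^ 2 ^ i = (m : F)) (hcong : ¬ 3 ∣ m * ℓ + 1) :
    {x : F | x ^ q ^ 3 = x ∧ x ^ (2 * q ^ ℓ + 1) + x + a = 0}.ncard = 3 := by
  subst hq
  have ha0 : a ≠ 0 := by
    rintro rfl
    simp at ha2
  have ha1 : a ≠ 1 := by
    rintro rfl
    simp at ha2
  obtain ⟨r, s, h⟩ := exists_isCubicRootPair ha0
  obtain ⟨u, v, h₁⟩ := exists_isCubicRootPair (one_ne_zero (α := F))
  rw [setOf_roots_eq_twistedRoots]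
  exact h.ncard_twistedRoots h₁ haq ha1 htr hcong

end TwistedRoots

theorem not_three_dvd_mul_add_one {m ℓ : ℕ} (h : ¬ 3 ∣ ℓ + m) : ¬ 3 ∣ m * ℓ + 1 := by
  contrapose! h
  have hmod := Nat.mul_mod m ℓ 3
  rcases (by lia : ℓ % 3 = 0 ∨ ℓ % 3 = 1 ∨ ℓ % 3 = 2) with hℓ | hℓ | hℓ <;> rw [hℓ] at hmod <;> lia

/-- Theorem 1.1(1): if `ℓ ≢ -m (mod 3)` then `X^(2q^ℓ+1) + X + a` has exactly 3 roots
in `F_{q³}`, where `q = 2^m`, `a ∈ F_q \ F_2` and `Tr(1/a) = Tr(1)`. -/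
theorem roots_count_eq_three_of_not_cong
    (m ℓ : ℕ) (hm : 0 < m) (hℓ : 0 < ℓ) (hℓ3 : ¬ 3 ∣ ℓ)
    (q : ℕ) (hq : q = 2 ^ m)
    (a : K) (haq : a ^ q = a) (ha2 : a ^ 2 ≠ a)
    (htr : ∑ i ∈ Finset.range m, a⁻¹ ^ 2 ^ i = (m : K))
    (hcong : ¬ 3 ∣ (ℓ + m)) :
    {x : K | x ^ q ^ 3 = x ∧ x ^ (2 * q ^ ℓ + 1) + x + a = 0}.ncard = 3 :=
  roots_count_eq_three_of_not_cong_general m ℓ q hq a haq ha2 htr (not_three_dvd_mul_add_one hcong)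
end

section
/- The roots of D_n(X) in F_q \ F_2 are exactly the elements ζ + ζ⁻¹ where ζ ∈ F_{q²} satisfies ζ^n = 1 and ζ ≠ 1. Moreover, D_n(X) has exactly ⌊q/6⌋ roots in the algebraic closure of F_q that lie outside F_2, and all of these roots lie in F_q \ F_2. -/
open Polynomial

local notation "K" => AlgebraicClosure (ZMod 2)

/-!
In characteristic `2`, substituting `x = ζ + ζ⁻¹` turns `D_n(x) = 0` into `ζ ^ n = ζ⁻¹ ^ n`, that
is, `ζ ^ n = 1`. Since `ζ + ζ⁻¹` determines `ζ` up to inversion, Frobenius shows that `ζ + ζ⁻¹` is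
fixed by the `2 ^ m`-th power map iff `ζ ^ 2 ^ m = ζ` or `ζ ^ 2 ^ m = ζ⁻¹`. For `m = 1` this says
`ζ ^ 3 = 1`, so when `n` is prime to `3` the only root of `D_n` in `F_2` comes from `ζ = 1`; and
when `n` divides `2 ^ m - 1` or `2 ^ m + 1` all roots of `D_n` lie in the field with `2 ^ m`
elements. For `n` odd, the `n - 1` nontrivial `n`-th roots of unity fall into `(n - 1) / 2` pairs
`{ζ, ζ⁻¹}`, one for each root outside `F_2`. Finally, `4` has order `3` modulo `9`, so
`⌊(2 ^ m + 1) / 3⌋` is prime to `3` unless `3 ∣ m`.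
-/

section Arithmetic

lemma three_mul_two_pow_add_one_div_three (m : ℕ) :
    3 * ((2 ^ m + 1) / 3) = 2 ^ m - 1 ∨ 3 * ((2 ^ m + 1) / 3) = 2 ^ m + 1 := by
  have not_three_dvd : ¬ 3 ∣ 2 ^ m := fun h ↦
    absurd (Nat.prime_three.dvd_of_dvd_pow h) (by norm_num)
  omega

lemma two_pow_add_one_div_three_dvd (m : ℕ) :
    (2 ^ m + 1) / 3 ∣ 2 ^ m - 1 ∨ (2 ^ m + 1) / 3 ∣ 2 ^ m + 1 :=
  (three_mul_two_pow_add_one_div_three m).imp (Dvd.intro_left 3) (Dvd.intro_left 3)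

lemma three_dvd_of_nine_dvd_four_pow_sub_one {m : ℕ} (h : 9 ∣ 4 ^ m - 1) : 3 ∣ m := by
  have four_pow_eq_one : (4 : ZMod 9) ^ m = 1 := by
    have cast_sub_one := (ZMod.natCast_eq_zero_iff _ 9).mpr h
    rw [Nat.cast_sub (Nat.one_le_pow m 4 four_pos)] at cast_sub_one
    simpa [sub_eq_zero] using cast_sub_one
  have orderOf_four : orderOf (4 : ZMod 9) = 3 := orderOf_eq_prime (by decide) (by decide)
  exact orderOf_four ▸ orderOf_dvd_of_pow_eq_one four_pow_eq_one

lemma three_dvd_of_three_dvd_two_pow_add_one_div_three {m : ℕ} (h : 3 ∣ (2 ^ m + 1) / 3) :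
    3 ∣ m := by
  have nine_dvd : 9 ∣ 2 ^ m - 1 ∨ 9 ∣ 2 ^ m + 1 := by
    have := three_mul_two_pow_add_one_div_three m
    omega
  have four_pow_sub_one : 4 ^ m - 1 = (2 ^ m + 1) * (2 ^ m - 1) := by
    rw [← Nat.sq_sub_sq, one_pow, pow_right_comm]
    norm_num
  apply three_dvd_of_nine_dvd_four_pow_sub_one
  rw [four_pow_sub_one]
  exact nine_dvd.elim (Dvd.dvd.mul_left · _) (Dvd.dvd.mul_right · _)

lemma coprime_two_pow_add_one_div_three_six {m : ℕ} (hm : m ≠ 0) (hm3 : ¬ 3 ∣ m) :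
    ((2 ^ m + 1) / 3).Coprime 6 := by
  have two_dvd : 2 ∣ 2 ^ m := dvd_pow_self 2 hm
  have not_two_dvd : ¬ 2 ∣ (2 ^ m + 1) / 3 := by
    have := three_mul_two_pow_add_one_div_three m
    have := Nat.one_le_two_pow (n := m)
    omega
  have not_three_dvd := mt three_dvd_of_three_dvd_two_pow_add_one_div_three hm3
  exact Nat.Coprime.mul_right (Nat.prime_two.coprime_iff_not_dvd.mpr not_two_dvd).symm
    (Nat.prime_three.coprime_iff_not_dvd.mpr not_three_dvd).symm

lemma two_pow_add_one_div_three_div_two {m : ℕ} (hm : m ≠ 0) :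
    (2 ^ m + 1) / 3 / 2 = 2 ^ m / 6 := by
  have two_dvd : 2 ∣ 2 ^ m := dvd_pow_self 2 hm
  omega

end Arithmetic

section DivisionMonoid

variable {G : Type*} [DivisionMonoid G]

lemma pow_eq_self_or_inv_of_pow_eq_one {n q : ℕ} (hq : 0 < q) (hdvd : n ∣ q - 1 ∨ n ∣ q + 1)
    {z : G} (hz : z ^ n = 1) : z ^ q = z ∨ z ^ q = z⁻¹ := by
  have pow_eq_one_of_dvd {k : ℕ} (hk : n ∣ k) : z ^ k = 1 :=
    orderOf_dvd_iff_pow_eq_one.mp ((orderOf_dvd_of_pow_eq_one hz).trans hk)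
  refine hdvd.imp (fun h ↦ ?_) fun h ↦ ?_
  · rw [← Nat.sub_add_cancel hq, pow_succ, pow_eq_one_of_dvd h, one_mul]
  · exact eq_inv_of_mul_eq_one_left (by rw [← pow_succ, pow_eq_one_of_dvd h])

lemma pow_sq_eq_self_of_pow_eq_self_or_inv {q : ℕ} {z : G} (hz : z ^ q = z ∨ z ^ q = z⁻¹) :
    z ^ q ^ 2 = z := by
  rw [sq, pow_mul]
  rcases hz with h | h <;> simp only [h, inv_pow, inv_inv]

lemma inv_ne_self_of_pow_eq_one_of_odd {n : ℕ} (hn : Odd n) {z : G} (hz : z ^ n = 1)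
    (hz1 : z ≠ 1) : z⁻¹ ≠ z := by
  intro hinv
  have hz2 : z ^ 2 = 1 := calc
    z ^ 2 = z⁻¹ * z := by rw [hinv, sq]
    _ = 1 := (IsUnit.of_pow_eq_one hz hn.pos.ne').inv_mul_cancel
  exact hz1 ((pow_eq_one_iff_of_coprime hn.coprime_two_right).mp ⟨hz, hz2⟩)

end DivisionMonoid

section Field

variable {F : Type*} [Field F]

lemma add_inv_eq_add_inv_iff {a b : F} (ha : a ≠ 0) (hb : b ≠ 0) :
    a + a⁻¹ = b + b⁻¹ ↔ a = b ∨ a = b⁻¹ := by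
  have factorization : a + a⁻¹ - (b + b⁻¹) = (a - b) * (a - b⁻¹) * a⁻¹ := by
    field_simp
    ring
  rw [← sub_eq_zero, factorization]
  simp [sub_eq_zero, ha]

lemma two_mul_card_image_add_inv [DecidableEq F] {s : Finset F} (hinv : ∀ z ∈ s, z⁻¹ ∈ s)
    (hne : ∀ z ∈ s, z⁻¹ ≠ z) : 2 * (s.image fun z ↦ z + z⁻¹).card = s.card := by
  have ne_zero : ∀ z ∈ s, z ≠ 0 := by
    rintro z hz rfl
    exact hne 0 hz inv_zero
  have fiber_eq : ∀ z ∈ s, s.filter (fun w ↦ w + w⁻¹ = z + z⁻¹) = {z, z⁻¹} := by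
    intro z hz
    ext w
    simp only [Finset.mem_filter, Finset.mem_insert, Finset.mem_singleton]
    constructor
    · rintro ⟨hw, h⟩
      exact (add_inv_eq_add_inv_iff (ne_zero w hw) (ne_zero z hz)).mp h
    · rintro (rfl | rfl)
      · exact ⟨hz, rfl⟩
      · exact ⟨hinv z hz, by rw [inv_inv, add_comm]⟩
  rw [Finset.card_eq_sum_card_image (fun z ↦ z + z⁻¹) s, mul_comm, eq_comm]
  refine Finset.sum_const_nat (Finset.forall_mem_image.mpr fun z hz ↦ ?_)
  rw [fiber_eq z hz, Finset.card_pair (hne z hz).symm]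

lemma ncard_image_add_inv_nontrivial_roots_of_unity {n : ℕ} [HasEnoughRootsOfUnity F n]
    (hn : Odd n) :
    ((fun ζ : F ↦ ζ + ζ⁻¹) '' {ζ | ζ ^ n = 1 ∧ ζ ≠ 1}).ncard = n / 2 := by
  classical
  let s : Finset F := (nthRootsFinset n (1 : F)).erase 1
  have mem_s (z : F) : z ∈ s ↔ z ^ n = 1 ∧ z ≠ 1 := by
    rw [Finset.mem_erase, mem_nthRootsFinset hn.pos, and_comm]
  have card_s : s.card = n - 1 := by
    obtain ⟨r, hr⟩ := HasEnoughRootsOfUnity.exists_primitiveRoot F n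
    rw [Finset.card_erase_of_mem ((mem_nthRootsFinset hn.pos 1).mpr (one_pow n)),
      hr.card_nthRootsFinset]
  have two_mul_card := two_mul_card_image_add_inv (s := s)
    (fun z hz ↦ (mem_s _).mpr (by simpa using (mem_s z).mp hz))
    (fun z hz ↦ inv_ne_self_of_pow_eq_one_of_odd hn ((mem_s z).mp hz).1 ((mem_s z).mp hz).2)
  have coe_s : (s : Set F) = {ζ | ζ ^ n = 1 ∧ ζ ≠ 1} := Set.ext mem_s
  rw [← coe_s, ← Finset.coe_image, Set.ncard_coe_finset]
  obtain ⟨k, rfl⟩ := hn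
  omega

lemma add_inv_pow_expChar_pow_eq_self_iff (p m : ℕ) [ExpChar F p] {z : F} (hz : z ≠ 0) :
    (z + z⁻¹) ^ p ^ m = z + z⁻¹ ↔ z ^ p ^ m = z ∨ z ^ p ^ m = z⁻¹ := by
  rw [add_pow_expChar_pow, inv_pow, add_inv_eq_add_inv_iff (pow_ne_zero _ hz) hz]

end Field

section CharTwo

variable {F : Type*} [Field F] [CharP F 2]

lemma add_inv_eq_zero_iff_of_charTwo {z : F} (hz : z ≠ 0) : z + z⁻¹ = 0 ↔ z = 1 := by
  simpa [CharTwo.add_self_eq_zero] using add_inv_eq_add_inv_iff hz (one_ne_zero (α := F))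

lemma eval_dickson_add_inv_eq_zero_iff (n : ℕ) {z : F} (hz : z ≠ 0) :
    eval (z + z⁻¹) (dickson 1 (1 : F) n) = 0 ↔ z ^ n = 1 := by
  rw [dickson_one_one_eval_add_inv _ _ (mul_inv_cancel₀ hz), inv_pow,
    add_inv_eq_zero_iff_of_charTwo (pow_ne_zero n hz)]

lemma add_inv_sq_eq_self_iff_pow_three_eq_one {z : F} (hz : z ≠ 0) :
    (z + z⁻¹) ^ 2 = z + z⁻¹ ↔ z ^ 3 = 1 := by
  have sq_eq_self_iff : z ^ 2 = z ↔ z = 1 := by rw [sq, mul_eq_left₀ hz]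
  have sq_eq_inv_iff : z ^ 2 = z⁻¹ ↔ z ^ 3 = 1 := by rw [← mul_eq_one_iff_eq_inv₀ hz, ← pow_succ]
  have frobenius_fixed := add_inv_pow_expChar_pow_eq_self_iff 2 1 hz
  rw [pow_one, sq_eq_self_iff, sq_eq_inv_iff] at frobenius_fixed
  rw [frobenius_fixed, or_iff_right_of_imp]
  rintro rfl
  exact one_pow 3

lemma exists_add_inv_eq [IsSepClosed F] (x : F) : ∃ z : F, z ≠ 0 ∧ z + z⁻¹ = x := by
  rcases eq_or_ne x 0 with rfl | hx
  · exact ⟨1, one_ne_zero, (add_inv_eq_zero_iff_of_charTwo one_ne_zero).mpr rfl⟩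
  obtain ⟨z, hz⟩ := IsSepClosed.exists_root_C_mul_X_pow_add_C_mul_X_add_C' 2 2 1 (-x) 1
    dvd_rfl le_rfl (neg_ne_zero.mpr hx)
  have hz0 : z ≠ 0 := by
    rintro rfl
    simp at hz
  refine ⟨z, hz0, ?_⟩
  field_simp
  linear_combination hz

lemma dickson_roots_sq_ne_self_eq_image [IsSepClosed F] {n : ℕ} (hn : n.Coprime 3) :
    {x : F | x ^ 2 ≠ x ∧ eval x (dickson 1 (1 : F) n) = 0} =
      (fun ζ ↦ ζ + ζ⁻¹) '' {ζ | ζ ^ n = 1 ∧ ζ ≠ 1} := by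
  have hn0 : n ≠ 0 := by
    rintro rfl
    norm_num at hn
  ext x
  constructor
  · rintro ⟨hx, hroot⟩
    obtain ⟨z, hz0, rfl⟩ := exists_add_inv_eq x
    refine ⟨z, ⟨(eval_dickson_add_inv_eq_zero_iff n hz0).mp hroot, ?_⟩, rfl⟩
    rintro rfl
    exact hx ((add_inv_sq_eq_self_iff_pow_three_eq_one hz0).mpr (one_pow 3))
  · rintro ⟨z, ⟨hz, hz1⟩, rfl⟩
    have hz0 : z ≠ 0 := (IsUnit.of_pow_eq_one hz hn0).ne_zero
    refine ⟨fun hsq ↦ hz1 ?_, (eval_dickson_add_inv_eq_zero_iff n hz0).mpr hz⟩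
    have hz3 : z ^ 3 = 1 := (add_inv_sq_eq_self_iff_pow_three_eq_one hz0).mp hsq
    exact (pow_eq_one_iff_of_coprime hn).mp ⟨hz, hz3⟩

theorem dickson_roots_description_general [IsSepClosed F] {m n : ℕ} (hn : n.Coprime 6)
    (hdvd : n ∣ 2 ^ m - 1 ∨ n ∣ 2 ^ m + 1) :
    ({x : F | x ^ 2 ^ m = x ∧ x ^ 2 ≠ x ∧ eval x (dickson 1 (1 : F) n) = 0}
        = {x : F | ∃ ζ : F, ζ ^ (2 ^ m) ^ 2 = ζ ∧ ζ ^ n = 1 ∧ ζ ≠ 1 ∧ x = ζ + ζ⁻¹}) ∧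
      {x : F | x ^ 2 ≠ x ∧ eval x (dickson 1 (1 : F) n) = 0}.ncard = n / 2 ∧
      {x : F | x ^ 2 ≠ x ∧ eval x (dickson 1 (1 : F) n) = 0} ⊆ {x : F | x ^ 2 ^ m = x} := by
  have hodd : Odd n := (hn.coprime_dvd_right (by norm_num : 2 ∣ 6)).symm.odd_of_left
  have roots_eq := dickson_roots_sq_ne_self_eq_image (F := F)
    (hn.coprime_dvd_right (by norm_num : 3 ∣ 6))
  have pow_eq {ζ : F} (hζ : ζ ^ n = 1) : ζ ^ 2 ^ m = ζ ∨ ζ ^ 2 ^ m = ζ⁻¹ :=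
    pow_eq_self_or_inv_of_pow_eq_one (by positivity) hdvd hζ
  have add_inv_pow_eq {ζ : F} (hζ : ζ ^ n = 1) : (ζ + ζ⁻¹) ^ 2 ^ m = ζ + ζ⁻¹ :=
    (add_inv_pow_expChar_pow_eq_self_iff 2 m (IsUnit.of_pow_eq_one hζ hodd.pos.ne').ne_zero).mpr
      (pow_eq hζ)
  refine ⟨?_, ?_, ?_⟩
  · rw [Set.ofPred_and, roots_eq]
    ext x
    constructor
    · rintro ⟨-, ζ, ⟨hζ, hζ1⟩, rfl⟩
      exact ⟨ζ, pow_sq_eq_self_of_pow_eq_self_or_inv (pow_eq hζ), hζ, hζ1, rfl⟩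
    · rintro ⟨ζ, -, hζ, hζ1, rfl⟩
      exact ⟨add_inv_pow_eq hζ, ζ, ⟨hζ, hζ1⟩, rfl⟩
  · have : NeZero (n : F) := ⟨by simp [CharTwo.natCast_eq_ite, hodd]⟩
    rw [roots_eq, ncard_image_add_inv_nontrivial_roots_of_unity hodd]
  · rw [roots_eq]
    rintro _ ⟨ζ, ⟨hζ, -⟩, rfl⟩
    exact add_inv_pow_eq hζ

end CharTwo

/-- Proposition 1.2: for `3 ∤ m`, `q = 2^m`, `n = ⌊(q+1)/3⌋`, the roots of `D_n` in
`F_q \ F_2` are the elements `ζ + ζ⁻¹` with `ζ ∈ F_{q²}`, `ζ^n = 1`, `ζ ≠ 1`; moreover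
`D_n` has exactly `⌊q/6⌋` roots outside `F_2` in the algebraic closure, all lying in `F_q`. -/
theorem dickson_roots_description
    (m : ℕ) (hm : 0 < m) (hm3 : ¬ 3 ∣ m)
    (q : ℕ) (hq : q = 2 ^ m) (n : ℕ) (hn : n = (q + 1) / 3) :
    ({x : K | x ^ q = x ∧ x ^ 2 ≠ x ∧ Polynomial.eval x (Polynomial.dickson 1 (1 : K) n) = 0}
        = {x : K | ∃ ζ : K, ζ ^ q ^ 2 = ζ ∧ ζ ^ n = 1 ∧ ζ ≠ 1 ∧ x = ζ + ζ⁻¹}) ∧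
      {x : K | x ^ 2 ≠ x ∧ Polynomial.eval x (Polynomial.dickson 1 (1 : K) n) = 0}.ncard = q / 6 ∧
      {x : K | x ^ 2 ≠ x ∧ Polynomial.eval x (Polynomial.dickson 1 (1 : K) n) = 0}
        ⊆ {x : K | x ^ q = x} := by
  subst hq hn
  rw [← two_pow_add_one_div_three_div_two hm.ne']
  exact dickson_roots_description_general (coprime_two_pow_add_one_div_three_six hm.ne' hm3)
    (two_pow_add_one_div_three_dvd m)
end

section
/- The element b does not lie in F_4, and the sets Λ_0, Λ_1, Λ_2 are pairwise disjoint sets of size 3. Moreover, if m ≡ 0 (mod 3) and c is a cube in F_{q²}, then Γ_ℓ = Λ_0; and if m ≡ 0 (mod 3) and c is not a cube in F_{q²}, then Γ_ℓ = Λ_k for the unique k ∈ {1,2} such that c^((q²−1)/3) = ω^(−kℓ). -/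
open Polynomial

local notation "K" => AlgebraicClosure (ZMod 2)

/-!
A root `x` of `X ^ (2 * q ^ ℓ + 1) + X + a` in `F_{q³}` satisfies `y² x + x + a = 0` for
`y = x ^ q ^ ℓ`, and three such steps lead back to `x`. In characteristic two `y` is determined by
`x`, and eliminating the intermediate points from a 3-cycle leaves a nonzero polynomial of degree at
most nine in `x`. The set `Λ_0` consists of three fixed points of the step, while `Λ_1` and `Λ_2`
are 3-cycles, on which the step multiplies the cube root `v` by `ω`, respectively by `ω²`; so these
nine points are all the points of period dividing three. The translation `b ↦ b + 1` inverts `c` and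
exchanges the two 3-cycles.

It remains to see on which of these points the `q ^ ℓ`-Frobenius acts as the step. The `q`-Frobenius
sends the point with parameter `v` to the one with parameter `ζ⁻¹ v`, where `v ^ q² = ζ v`, so a
point of `Λ_k` lies in `Γ_ℓ` if and only if `ζ ^ ℓ * ω ^ k = 1`. If `3 ∣ m`, then
`ζ = c ^ ((q² - 1) / 3)` for all nine points, and exactly one `k` qualifies.
-/

section CubeRoots

variable {F : Type*} [Field F] {s t d v ω : F} {n : ℕ}

theorem isPrimitiveRoot_three_of_pow_four_eq (hω4 : ω ^ 4 = ω) (hω2 : ω ^ 2 ≠ ω) :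
    IsPrimitiveRoot ω 3 := by
  have hω0 : ω ≠ 0 := by rintro rfl; simp at hω2
  have hω1 : ω ≠ 1 := by rintro rfl; simp at hω2
  have hω3 : ω ^ 3 = 1 := mul_right_cancel₀ hω0 (by rw [← pow_succ, hω4, one_mul])
  exact orderOf_eq_prime hω3 hω1 ▸ IsPrimitiveRoot.orderOf ω

theorem sq_add_self_add_one_eq_zero (hω : IsPrimitiveRoot ω 3) : ω ^ 2 + ω + 1 = 0 := by
  have h := hω.geom_sum_eq_zero (by norm_num)
  simp only [Finset.sum_range_succ, Finset.sum_range_zero, pow_zero, pow_one] at h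
  linear_combination h

theorem inv_eq_sq_of_pow_three_eq_one (hω : ω ^ 3 = 1) : ω⁻¹ = ω ^ 2 :=
  inv_eq_of_mul_eq_one_left (by rw [← pow_succ, hω])

theorem ne_zero_of_pow_eq (hn : n ≠ 0) (hd : d ≠ 0) (hv : v ^ n = d) : v ≠ 0 := by
  rintro rfl
  exact hd (by rw [← hv, zero_pow hn])

theorem mul_pow_of_pow_eq_one (hω : ω ^ n = 1) (v : F) : (ω * v) ^ n = v ^ n := by
  rw [mul_pow, hω, one_mul]

theorem ncard_setOf_pow_eq (hω : IsPrimitiveRoot ω n) (hn : 0 < n) (hd : d ≠ 0)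
    (hv : v ^ n = d) : {w : F | w ^ n = d}.ncard = n := by
  classical
  have hset : {w : F | w ^ n = d} = (nthRoots n d).toFinset := by
    ext w
    simp [mem_nthRoots hn]
  rw [hset, Set.ncard_coe_finset, Multiset.toFinset_card_of_nodup (hω.nthRoots_nodup hd),
    hω.card_nthRoots, if_pos ⟨v, hv⟩]

/-- The degree-two map `v ↦ v + v⁻¹` followed by the affine map `y ↦ (s + y) / t`. Each of the
sets `Λ_k` is the image under such a map of the cube roots of some element. -/
def joukowski (s t v : F) : F := (s + v + v⁻¹) / t

theorem joukowski_injOn (ht : t ≠ 0) (hn : n ≠ 0) (hd : d ≠ 0) (hd2 : d ^ 2 ≠ 1) :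
    Set.InjOn (joukowski s t) {v | v ^ n = d} := by
  intro v (hv : v ^ n = d) w (hw : w ^ n = d) hvw
  have hv0 : v ≠ 0 := ne_zero_of_pow_eq hn hd hv
  have hw0 : w ≠ 0 := ne_zero_of_pow_eq hn hd hw
  simp only [joukowski, add_assoc, div_left_inj' ht, add_right_inj] at hvw
  have hfactor : (v - w) * (v * w - 1) = 0 := by
    field_simp at hvw
    linear_combination hvw
  refine sub_eq_zero.1 ((mul_eq_zero.1 hfactor).resolve_right fun hinv ↦ hd2 ?_)
  calc d ^ 2 = (v * w) ^ n := by rw [mul_pow, hv, hw, sq]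
    _ = 1 := by rw [sub_eq_zero.1 hinv, one_pow]

theorem joukowski_inv (s t v : F) : joukowski s t v⁻¹ = joukowski s t v := by
  rw [joukowski, joukowski, inv_inv, add_right_comm]

theorem image_joukowski_inv (s t d : F) (n : ℕ) :
    joukowski s t '' {v | v ^ n = d⁻¹} = joukowski s t '' {v | v ^ n = d} := by
  have hinv : {v : F | v ^ n = d⁻¹} = Inv.inv '' {v | v ^ n = d} := by
    ext v
    simp [inv_pow, inv_eq_iff_eq_inv]
  simp only [hinv, Set.image_image, joukowski_inv]

theorem joukowski_orbit_sum (hω : IsPrimitiveRoot ω 3) (s t v : F) :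
    joukowski s t v + joukowski s t (ω * v) + joukowski s t (ω * (ω * v)) = 3 * s / t := by
  have hsum := sq_add_self_add_one_eq_zero hω
  have hinv : ω⁻¹ = ω ^ 2 := inv_eq_sq_of_pow_three_eq_one hω.pow_eq_one
  simp only [joukowski, mul_inv, hinv, ← add_div]
  congr 1
  linear_combination (v + (ω ^ 2 - ω + 1) * v⁻¹) * hsum

end CubeRoots

section RootOfUnityExponents

variable {F : Type*} [Field F] {ω z : F} {ℓ : ℕ}

theorem exists_forall_pow_mul_eq_one_iff (hω : IsPrimitiveRoot ω 3) (hz : z ^ 3 = 1)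
    (hz1 : z ≠ 1) :
    ∃ k, (k = 1 ∨ k = 2) ∧ ∀ j, j = 1 ∨ j = 2 → (z * ω ^ j = 1 ↔ j = k) := by
  obtain ⟨i, hi, rfl⟩ := hω.eq_pow_of_pow_eq_one hz
  have hi0 : i ≠ 0 := by rintro rfl; simp at hz1
  refine ⟨3 - i, by lia, fun j hj ↦ ?_⟩
  rw [← pow_add, hω.pow_eq_one_iff_dvd]
  lia

theorem eq_inv_pow_mul_iff (hω : IsPrimitiveRoot ω 3) (hz : z ^ 3 = 1) (hℓ : ¬ 3 ∣ ℓ) (j : ℕ) :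
    z = (ω ^ (j * ℓ))⁻¹ ↔ z ^ ℓ * ω ^ j = 1 := by
  obtain ⟨i, -, rfl⟩ := hω.eq_pow_of_pow_eq_one hz
  have hcoprime : Nat.Coprime 3 ℓ := (Nat.Prime.coprime_iff_not_dvd Nat.prime_three).2 hℓ
  have hℓ2 : ℓ ^ 2 ≡ 1 [MOD 3] := by
    have hcases : ℓ % 3 = 1 ∨ ℓ % 3 = 2 := by lia
    rcases hcases with h | h <;> simp [Nat.ModEq, Nat.pow_mod, h]
  have hmod : (i + j * ℓ) * ℓ ≡ i * ℓ + j [MOD 3] := by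
    simpa [add_mul, mul_assoc, sq] using (hℓ2.mul_left j).add_left (i * ℓ)
  rw [← mul_eq_one_iff_eq_inv₀ (pow_ne_zero _ (hω.ne_zero three_ne_zero)), ← pow_mul, ← pow_add,
    ← pow_add, hω.pow_eq_one_iff_dvd, hω.pow_eq_one_iff_dvd, ← hmod.dvd_iff dvd_rfl,
    hcoprime.dvd_mul_right]

end RootOfUnityExponents

section TrinomialStep

variable {F : Type*} [Field F] {a x y y' z : F}

/-- The equation `x ^ (2 * Q + 1) + x + a = 0` with the Frobenius conjugate `x ^ Q` replaced by an
independent variable `y`. -/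
def TrinomialStep (a x y : F) : Prop := y ^ 2 * x + x + a = 0

theorem TrinomialStep.map {σ : F →+* F} (ha : σ a = a) (h : TrinomialStep a x y) :
    TrinomialStep a (σ x) (σ y) := by
  simpa [TrinomialStep, ha] using congrArg σ h

/-- The points of a cycle of length dividing three of the relation `TrinomialStep a`. -/
def threePeriodicPoints (a : F) : Set F :=
  {x | ∃ y z, TrinomialStep a x y ∧ TrinomialStep a y z ∧ TrinomialStep a z x}

variable [CharP F 2]

theorem TrinomialStep.right_unique (ha : a ≠ 0) (h : TrinomialStep a x y)
    (h' : TrinomialStep a x y') : y = y' := by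
  have hx : x ≠ 0 := by rintro rfl; exact ha (by simpa [TrinomialStep] using h)
  refine CharTwo.sq_inj.1 (mul_right_cancel₀ hx ?_)
  rw [TrinomialStep] at h h'
  linear_combination h - h'

theorem trinomialStep_iff : TrinomialStep a x y ↔ y ^ 2 * x = x + a := by
  rw [TrinomialStep, add_assoc, CharTwo.add_eq_zero]

theorem nonic_eq_zero_of_mem_threePeriodicPoints (hx : x ∈ threePeriodicPoints a) :
    (1 + a ^ 2) * x ^ 9 + a * x ^ 8 + (1 + a + a ^ 2) ^ 2 * x + a * (1 + a) ^ 4 = 0 := by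
  obtain ⟨y, z, hxy, hyz, hzx⟩ := hx
  rw [trinomialStep_iff] at hxy hyz hzx
  -- Raising the three relations to the powers 1, 2, 4 makes the occurrences of `y` and `z` match.
  have hyz_sq : z ^ 4 * y ^ 2 = y ^ 2 + a ^ 2 := by
    rw [← CharTwo.add_sq, ← hyz]
    ring
  have hzx_pow_four : x ^ 8 * z ^ 4 = z ^ 4 + a ^ 4 := by
    calc x ^ 8 * z ^ 4 = ((x ^ 2 * z) ^ 2) ^ 2 := by ring
      _ = z ^ 4 + a ^ 4 := by rw [hzx, CharTwo.add_sq, CharTwo.add_sq, ← pow_mul, ← pow_mul]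
  linear_combination y ^ 2 * x * hzx_pow_four - (x ^ 9 - x) * hyz_sq - (x ^ 8 - 1 - a ^ 4) * hxy +
    ((1 + a + 2 * a ^ 2 + a ^ 3 + a ^ 4) * x + a * (1 + 2 * a + 3 * a ^ 2 + 2 * a ^ 3 + a ^ 4)) *
      CharTwo.two_eq_zero (R := F)

theorem threePeriodicPoints_finite_and_ncard_le (ha : a ≠ 0) :
    (threePeriodicPoints a).Finite ∧ (threePeriodicPoints a).ncard ≤ 9 := by
  set P : F[X] := C (1 + a ^ 2) * X ^ 9 + C a * X ^ 8 + C ((1 + a + a ^ 2) ^ 2) * X +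
    C (a * (1 + a) ^ 4) with hP
  have hcoeff : P.coeff 8 = a := by simp [hP, -map_add, -map_mul, -map_pow]
  have hP0 : P ≠ 0 := by
    intro h
    exact ha (by rw [← hcoeff, h, coeff_zero])
  have hdeg : P.natDegree ≤ 9 := by rw [hP]; compute_degree
  have hsub : threePeriodicPoints a ⊆ P.rootSet F := fun x hx ↦
    mem_rootSet.2 ⟨hP0, by simpa [hP] using nonic_eq_zero_of_mem_threePeriodicPoints hx⟩
  have hfin := P.rootSet_finite F
  exact ⟨hfin.subset hsub, (Set.ncard_le_ncard hsub hfin).trans ((P.ncard_rootSet_le F).trans hdeg)⟩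

end TrinomialStep

section FieldEndomorphism

variable {F : Type*} [Field F] {σ : F →+* F} {ε : ℤˣ} {s t v ω η ζ a : F}

theorem pow_apply_eq_self {x : F} (hx : σ x = x) (n : ℕ) : (σ ^ n) x = x := by
  rw [RingHom.coe_pow]
  exact (show Function.IsFixedPt σ x from hx).iterate n

theorem exists_units_map_eq_zpow (hω : IsPrimitiveRoot ω 3) (σ : F →+* F) :
    ∃ ε : ℤˣ, σ ω = ω ^ (ε : ℤ) := by
  have hσω := hω.map_of_injective σ.injective
  obtain ⟨i, hi, hωi⟩ := hω.eq_pow_of_pow_eq_one hσω.pow_eq_one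
  interval_cases i
  · exact absurd hωi.symm (by simpa using hσω.ne_one (by norm_num))
  · exact ⟨1, by simpa using hωi.symm⟩
  · refine ⟨-1, hωi.symm.trans ?_⟩
    simpa using (inv_eq_sq_of_pow_three_eq_one hω.pow_eq_one).symm

theorem map_eq_zpow_of_pow_three_eq_one (hω : IsPrimitiveRoot ω 3) (hσω : σ ω = ω ^ (ε : ℤ))
    (hη : η ^ 3 = 1) : σ η = η ^ (ε : ℤ) := by
  obtain ⟨i, -, rfl⟩ := hω.eq_pow_of_pow_eq_one hη
  rw [map_pow, hσω, ← zpow_natCast, ← zpow_natCast, zpow_comm]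

theorem map_map_eq_self (hv : σ v = v ^ (ε : ℤ)) : σ (σ v) = v := by
  rw [hv, map_zpow₀, hv, ← zpow_mul, ← Units.val_mul, Int.units_mul_self, Units.val_one, zpow_one]

theorem map_map_eq_self_of_pow_three_eq_one (hω : IsPrimitiveRoot ω 3) (hη : η ^ 3 = 1) :
    σ (σ η) = η := by
  obtain ⟨ε, hσω⟩ := exists_units_map_eq_zpow hω σ
  exact map_map_eq_self (map_eq_zpow_of_pow_three_eq_one hω hσω hη)

theorem pow_three_eq_one_of_map_map (hv0 : v ≠ 0) (hv : σ (v ^ 3) = (v ^ 3) ^ (ε : ℤ))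
    (hζ : σ (σ v) = ζ * v) : ζ ^ 3 = 1 := by
  refine mul_right_cancel₀ (pow_ne_zero 3 hv0) ?_
  rw [← mul_pow, ← hζ, ← map_pow, ← map_pow, map_map_eq_self hv, one_mul]

theorem map_joukowski (hω : IsPrimitiveRoot ω 3) (hσω : σ ω = ω ^ (ε : ℤ)) (hs : σ s = s)
    (ht : σ t = t) (hv0 : v ≠ 0) (hv : σ (v ^ 3) = (v ^ 3) ^ (ε : ℤ)) (hζ : σ (σ v) = ζ * v) :
    σ (joukowski s t v) = joukowski s t (ζ⁻¹ * v) := by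
  obtain ⟨η, hη⟩ : ∃ η, σ v = η * v ^ (ε : ℤ) := ⟨σ v / v ^ (ε : ℤ), by field_simp⟩
  have hη3 : η ^ 3 = 1 := by
    refine mul_right_cancel₀ (zpow_ne_zero (ε : ℤ) (pow_ne_zero 3 hv0)) ?_
    calc η ^ 3 * (v ^ 3) ^ (ε : ℤ) = (η * v ^ (ε : ℤ)) ^ 3 := by
          rw [mul_pow, ← zpow_natCast v, zpow_comm, zpow_natCast]
      _ = 1 * (v ^ 3) ^ (ε : ℤ) := by rw [← hη, ← map_pow, hv, one_mul]
  have hση := map_eq_zpow_of_pow_three_eq_one hω hσω hη3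
  have hζη : ζ⁻¹ = η ^ (ε : ℤ) := by
    have hmul : ζ * v = η ^ (ε : ℤ) * η ^ (ε : ℤ) * v := by
      rw [← hζ, hη, map_mul, map_zpow₀, hση, hη, mul_zpow, ← zpow_mul v, ← Units.val_mul,
        Int.units_mul_self, Units.val_one, zpow_one, mul_assoc]
    rw [mul_right_cancel₀ hv0 hmul]
    refine inv_eq_of_mul_eq_one_right ?_
    rw [← mul_zpow, ← mul_zpow, ← pow_three', hη3, one_zpow]
  have hσv : σ (joukowski s t v) = joukowski s t (σ v) := by simp [joukowski, hs, ht]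
  rw [hσv, hη, hζη]
  rcases Int.units_eq_one_or ε with rfl | rfl
  · simp
  · rw [← joukowski_inv]
    simp [mul_comm]

theorem pow_map_joukowski (hω : IsPrimitiveRoot ω 3) (hσω : σ ω = ω ^ (ε : ℤ)) (hs : σ s = s)
    (ht : σ t = t) (hv0 : v ≠ 0) (hv : σ (v ^ 3) = (v ^ 3) ^ (ε : ℤ)) (hζ : σ (σ v) = ζ * v)
    (j : ℕ) : (σ ^ j) (joukowski s t v) = joukowski s t (ζ⁻¹ ^ j * v) := by
  have hζ3 := pow_three_eq_one_of_map_map hv0 hv hζ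
  have hζ0 : ζ ≠ 0 := by rintro rfl; simp at hζ3
  have hσζ : σ (σ ζ⁻¹) = ζ⁻¹ := by
    rw [map_inv₀, map_inv₀, map_map_eq_self_of_pow_three_eq_one hω hζ3]
  induction j with
  | zero => simp
  | succ j ih =>
    have hcube : (ζ⁻¹ ^ j * v) ^ 3 = v ^ 3 := by
      rw [mul_pow, pow_right_comm, inv_pow, hζ3, inv_one, one_pow, one_mul]
    have hmap : σ (σ (ζ⁻¹ ^ j * v)) = ζ * (ζ⁻¹ ^ j * v) := by
      rw [map_mul, map_mul, map_pow, map_pow, hσζ, hζ, mul_left_comm]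
    rw [pow_succ', RingHom.mul_def, RingHom.comp_apply, ih,
      map_joukowski hω hσω hs ht (by positivity) (hcube ▸ hv) hmap, pow_succ', mul_assoc]

/-- The solutions of `x ^ (2 * Q + 1) + x + a = 0` fixed by `σ ^ 3`, where `x ^ Q` is read as
`(σ ^ ℓ) x`. For `σ` the `q`-Frobenius this is `Γ_ℓ`. -/
def cyclicRoots (σ : F →+* F) (ℓ : ℕ) (a : F) : Set F :=
  {x | (σ ^ 3) x = x ∧ TrinomialStep a x ((σ ^ ℓ) x)}

theorem cyclicRoots_subset_threePeriodicPoints (ha : σ a = a) (ℓ : ℕ) :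
    cyclicRoots σ ℓ a ⊆ threePeriodicPoints a := by
  rintro x ⟨hx3, hstep⟩
  have hτa : (σ ^ ℓ) a = a := pow_apply_eq_self ha ℓ
  have hτ3 : (σ ^ ℓ) ((σ ^ ℓ) ((σ ^ ℓ) x)) = x := by
    have hfix : ((σ ^ 3) ^ ℓ) x = x := pow_apply_eq_self hx3 ℓ
    rwa [pow_right_comm, pow_three] at hfix
  have hstep2 := hstep.map hτa
  have hstep3 := hstep2.map hτa
  rw [hτ3] at hstep3
  exact ⟨_, _, hstep, hstep2, hstep3⟩

theorem joukowski_mem_cyclicRoots_iff [CharP F 2] (hω : IsPrimitiveRoot ω 3)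
    (hσω : σ ω = ω ^ (ε : ℤ)) (hs : σ s = s) (ht : σ t = t) (hv0 : v ≠ 0)
    (hv : σ (v ^ 3) = (v ^ 3) ^ (ε : ℤ)) (hζ : σ (σ v) = ζ * v) (ha : a ≠ 0) (hη : η ^ 3 = 1)
    (hinj : Set.InjOn (joukowski s t) {w | w ^ 3 = v ^ 3})
    (hstep : TrinomialStep a (joukowski s t v) (joukowski s t (η * v))) (ℓ : ℕ) :
    joukowski s t v ∈ cyclicRoots σ ℓ a ↔ ζ ^ ℓ * η = 1 := by
  have hζ3 := pow_three_eq_one_of_map_map hv0 hv hζ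
  have hζ0 : ζ ≠ 0 := by rintro rfl; simp at hζ3
  have hpow := pow_map_joukowski hω hσω hs ht hv0 hv hζ
  have hfixed : (σ ^ 3) (joukowski s t v) = joukowski s t v := by
    rw [hpow, inv_pow, hζ3, inv_one, one_mul]
  have hmem_iff : joukowski s t v ∈ cyclicRoots σ ℓ a ↔ ζ⁻¹ ^ ℓ = η := by
    rw [cyclicRoots, Set.mem_ofPred_eq, hpow ℓ, and_iff_right hfixed]
    refine ⟨fun h ↦ mul_right_cancel₀ hv0 (hinj ?_ ?_ (h.right_unique ha hstep)), fun h ↦ h ▸ hstep⟩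
    · simp [mul_pow, pow_right_comm _ ℓ, hζ3]
    · simp [mul_pow, hη]
  rw [hmem_iff, inv_pow, mul_eq_one_iff_inv_eq₀ (pow_ne_zero ℓ hζ0)]

end FieldEndomorphism

section KummerParam

variable {F : Type*} [Field F] [CharP F 2] {b v ω η : F}

/-- The element `c` of the theorem; the sets `Λ_k` are parametrized by the cube roots of
`ω ^ k * c`. -/
def kummerParam (ω b : F) : F := (b + ω) / (b + ω ^ 2)

theorem add_ne_zero_of_pow_three_eq_one (hb : b ^ 4 ≠ b) (hη : η ^ 3 = 1) : b + η ≠ 0 := by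
  intro h
  rw [CharTwo.add_eq_zero] at h
  exact hb (by rw [h, pow_succ, hη, one_mul])

theorem add_one_pow_four_ne (hb : b ^ 4 ≠ b) : (b + 1) ^ 4 ≠ b + 1 := by
  rwa [show 4 = 2 ^ 2 by norm_num, add_pow_char_pow, one_pow, Ne, add_left_inj]

theorem add_one_sq_add_add_one (b : F) : (b + 1) ^ 2 + (b + 1) + 1 = b ^ 2 + b + 1 := by
  linear_combination (b + 1) * CharTwo.two_eq_zero (R := F)

theorem add_mul_add_sq (hω : IsPrimitiveRoot ω 3) (b : F) :
    (b + ω) * (b + ω ^ 2) = b ^ 2 + b + 1 := by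
  linear_combination (b - 1 + ω) * sq_add_self_add_one_eq_zero hω -
    b * CharTwo.two_eq_zero (R := F)

theorem add_sq_ne_zero (hω : IsPrimitiveRoot ω 3) (hb : b ^ 4 ≠ b) : b + ω ^ 2 ≠ 0 :=
  add_ne_zero_of_pow_three_eq_one hb (by rw [pow_right_comm, hω.pow_eq_one, one_pow])

theorem sq_add_self_add_one_ne_zero (hω : IsPrimitiveRoot ω 3) (hb : b ^ 4 ≠ b) :
    b ^ 2 + b + 1 ≠ 0 := by
  rw [← add_mul_add_sq hω]
  exact mul_ne_zero (add_ne_zero_of_pow_three_eq_one hb hω.pow_eq_one) (add_sq_ne_zero hω hb)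

theorem kummerParam_ne_zero (hω : IsPrimitiveRoot ω 3) (hb : b ^ 4 ≠ b) : kummerParam ω b ≠ 0 :=
  div_ne_zero (add_ne_zero_of_pow_three_eq_one hb hω.pow_eq_one) (add_sq_ne_zero hω hb)

theorem omega_mul_kummerParam_ne_zero (hω : IsPrimitiveRoot ω 3) (hb : b ^ 4 ≠ b) :
    ω * kummerParam ω b ≠ 0 :=
  mul_ne_zero (hω.ne_zero three_ne_zero) (kummerParam_ne_zero hω hb)

theorem kummerParam_add_one (hω : IsPrimitiveRoot ω 3) (b : F) :
    kummerParam ω (b + 1) = (kummerParam ω b)⁻¹ := by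
  have hsum := sq_add_self_add_one_eq_zero hω
  rw [kummerParam, kummerParam, inv_div]
  congr 1
  · linear_combination (ω + 1) * CharTwo.two_eq_zero (R := F) - hsum
  · linear_combination hsum - ω * CharTwo.two_eq_zero (R := F)

theorem mul_kummerParam (hω : IsPrimitiveRoot ω 3) (hb : b ^ 4 ≠ b) :
    (b ^ 2 + b + 1) * kummerParam ω b = b ^ 2 + ω ^ 2 := by
  rw [← add_mul_add_sq hω, kummerParam, mul_assoc, mul_div_cancel₀ _ (add_sq_ne_zero hω hb), ← sq,
    CharTwo.add_sq]

theorem mul_kummerParam_inv (hω : IsPrimitiveRoot ω 3) (hb : b ^ 4 ≠ b) :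
    (b ^ 2 + b + 1) * (kummerParam ω b)⁻¹ = b ^ 2 + ω := by
  rw [← kummerParam_add_one hω, ← add_one_sq_add_add_one,
    mul_kummerParam hω (add_one_pow_four_ne hb), CharTwo.add_sq]
  linear_combination sq_add_self_add_one_eq_zero hω - ω * CharTwo.two_eq_zero (R := F)

theorem kummerParam_add_inv (hω : IsPrimitiveRoot ω 3) (hb : b ^ 4 ≠ b) :
    kummerParam ω b + (kummerParam ω b)⁻¹ = (b ^ 2 + b + 1)⁻¹ := by
  refine eq_inv_of_mul_eq_one_right ?_
  rw [mul_add, mul_kummerParam hω hb, mul_kummerParam_inv hω hb]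
  linear_combination sq_add_self_add_one_eq_zero hω + (b ^ 2 - 1) * CharTwo.two_eq_zero (R := F)

theorem kummerParam_sq_ne_one (hω : IsPrimitiveRoot ω 3) (hb : b ^ 4 ≠ b) :
    kummerParam ω b ^ 2 ≠ 1 := by
  rw [← one_pow 2, Ne, CharTwo.sq_inj, kummerParam, div_eq_one_iff_eq (add_sq_ne_zero hω hb),
    add_right_inj]
  intro h
  exact absurd (hω.pow_inj (by norm_num) (by norm_num) ((pow_one ω).trans h)) (by norm_num)

theorem omega_mul_kummerParam_sq_ne_one (hω : IsPrimitiveRoot ω 3) (hb : b ^ 4 ≠ b) :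
    (ω * kummerParam ω b) ^ 2 ≠ 1 := by
  rw [← one_pow 2, Ne, CharTwo.sq_inj, kummerParam, ← mul_div_assoc,
    div_eq_one_iff_eq (add_sq_ne_zero hω hb), mul_add, ← sq, add_left_inj]
  have hb0 : b ≠ 0 := by rintro rfl; simp at hb
  exact mul_eq_right₀ hb0 |>.not.2 (hω.ne_one (by norm_num))

theorem trinomialStep_fixed (hω : IsPrimitiveRoot ω 3) (hb : b ^ 4 ≠ b)
    (hv : v ^ 3 = kummerParam ω b) :
    TrinomialStep (b ^ 2 + b + 1)⁻¹ (joukowski 0 1 v) (joukowski 0 1 v) := by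
  have hv0 : v ≠ 0 := ne_zero_of_pow_eq three_ne_zero (kummerParam_ne_zero hω hb) hv
  rw [TrinomialStep, ← kummerParam_add_inv hω hb, ← hv, joukowski]
  field_simp
  linear_combination (2 * v ^ 2 + 2 * v ^ 4 + v ^ 6 + 1) * CharTwo.two_eq_zero (R := F)

theorem sq_conjugate_eq (hω : IsPrimitiveRoot ω 3) (hb : b ^ 4 ≠ b)
    (hv : v ^ 3 = ω * kummerParam ω b) :
    (ω * v + ω ^ 2 * v⁻¹) ^ 2 = kummerParam ω b * v⁻¹ + (kummerParam ω b)⁻¹ * v := by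
  have hω0 : ω ≠ 0 := hω.ne_zero three_ne_zero
  have hv0 : v ≠ 0 := ne_zero_of_pow_eq three_ne_zero (omega_mul_kummerParam_ne_zero hω hb) hv
  have hc : kummerParam ω b = v ^ 3 / ω := by rw [hv, mul_div_cancel_left₀ _ hω0]
  rw [CharTwo.add_sq, hc]
  field_simp
  linear_combination (ω ^ 2 + v ^ 4) * hω.pow_eq_one

theorem mul_sq_conjugate (hω : IsPrimitiveRoot ω 3) (hb : b ^ 4 ≠ b)
    (hv : v ^ 3 = ω * kummerParam ω b) :
    (b ^ 2 + b + 1) * (ω * v + ω ^ 2 * v⁻¹) ^ 2 =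
      b ^ 2 * (v + v⁻¹) + (ω * v + ω ^ 2 * v⁻¹) := by
  linear_combination (b ^ 2 + b + 1) * sq_conjugate_eq hω hb hv + v⁻¹ * mul_kummerParam hω hb +
    v * mul_kummerParam_inv hω hb

theorem sq_conjugate_mul (hω : IsPrimitiveRoot ω 3) (hb : b ^ 4 ≠ b)
    (hv : v ^ 3 = ω * kummerParam ω b) :
    (ω * v + ω ^ 2 * v⁻¹) ^ 2 * (v + v⁻¹) =
      (b ^ 2 + b + 1)⁻¹ + (v + v⁻¹) + (ω * v + ω ^ 2 * v⁻¹) := by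
  have hv0 : v ≠ 0 := ne_zero_of_pow_eq three_ne_zero (omega_mul_kummerParam_ne_zero hω hb) hv
  have hc0 := kummerParam_ne_zero hω hb
  have hvv : v * v⁻¹ = 1 := mul_inv_cancel₀ hv0
  have hv_sq : (kummerParam ω b)⁻¹ * v ^ 2 = ω * v⁻¹ := by
    field_simp
    linear_combination hv
  have hvinv_sq : kummerParam ω b * v⁻¹ ^ 2 = ω ^ 2 * v := by
    field_simp
    linear_combination -kummerParam ω b * hω.pow_eq_one - ω ^ 2 * hv
  linear_combination (v + v⁻¹) * sq_conjugate_eq hω hb hv +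
    (kummerParam ω b + (kummerParam ω b)⁻¹) * hvv + hv_sq + hvinv_sq + kummerParam_add_inv hω hb +
    (v - v⁻¹) * sq_add_self_add_one_eq_zero hω +
    (v⁻¹ * ω - v * (ω + 1)) * CharTwo.two_eq_zero (R := F)

theorem trinomialStep_cycle (hω : IsPrimitiveRoot ω 3) (hb : b ^ 4 ≠ b)
    (hv : v ^ 3 = ω * kummerParam ω b) :
    TrinomialStep (b ^ 2 + b + 1)⁻¹ (joukowski (b ^ 2 + b + 1) (b ^ 2) v)
      (joukowski (b ^ 2 + b + 1) (b ^ 2) (ω * v)) := by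
  have hωinv : ω⁻¹ = ω ^ 2 := inv_eq_sq_of_pow_three_eq_one hω.pow_eq_one
  have hb0 : b ≠ 0 := by rintro rfl; simp at hb
  have hlin := mul_sq_conjugate hω hb hv
  have hmul := sq_conjugate_mul hω hb hv
  have he0 := sq_add_self_add_one_ne_zero hω hb
  have he_sq : (b ^ 2 + b + 1) ^ 2 = b ^ 4 + b ^ 2 + 1 := by
    rw [CharTwo.add_sq, CharTwo.add_sq, ← pow_mul, one_pow]
  rw [TrinomialStep, joukowski, joukowski, mul_inv, hωinv, add_assoc _ (ω * v), add_assoc _ v]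
  set e := b ^ 2 + b + 1
  set y := v + v⁻¹
  set y' := ω * v + ω ^ 2 * v⁻¹
  have he_inv : e⁻¹ * (1 + b ^ 6) = (1 + b ^ 2) * e := by
    field_simp
    linear_combination -(1 + b ^ 2) * he_sq - (b ^ 2 + b ^ 4) * CharTwo.two_eq_zero (R := F)
  have hcleared : (e + y') ^ 2 * (e + y) + b ^ 4 * (e + y) + e⁻¹ * b ^ 6 = 0 := by
    linear_combination hlin + hmul + he_inv + (e + y) * he_sq +
      ((b ^ 4 + b ^ 2 + 1) * (e + y) + e * y' * (e + y) + y') * CharTwo.two_eq_zero (R := F)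
  field_simp
  field_simp at hcleared
  linear_combination hcleared

end KummerParam

section PeriodicPoints

variable {F : Type*} [Field F] [CharP F 2] {b x y z ω : F}

/-- The set `Λ_0` of the theorem, with the cube roots taken in all of `F`. -/
def fixedRoots (ω b : F) : Set F := joukowski 0 1 '' {v | v ^ 3 = kummerParam ω b}

/-- The set `Λ_1` of the theorem, with the cube roots taken in all of `F` and `b ^ 2 + b + 1` in
place of `a⁻¹`. The set `Λ_2` is `cycleRoots ω (b + 1)`, see `cycleRoots_add_one`. -/
def cycleRoots (ω b : F) : Set F :=
  joukowski (b ^ 2 + b + 1) (b ^ 2) '' {v | v ^ 3 = ω * kummerParam ω b}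

theorem fixedRoots_add_one (hω : IsPrimitiveRoot ω 3) (b : F) :
    fixedRoots ω (b + 1) = fixedRoots ω b := by
  rw [fixedRoots, kummerParam_add_one hω, image_joukowski_inv, fixedRoots]

theorem cycleRoots_add_one (hω : IsPrimitiveRoot ω 3) (b : F) :
    cycleRoots ω (b + 1) =
      joukowski (b ^ 2 + b + 1) (b ^ 2 + 1) '' {v | v ^ 3 = ω ^ 2 * kummerParam ω b} := by
  have hinv : ω * (kummerParam ω b)⁻¹ = (ω ^ 2 * kummerParam ω b)⁻¹ := by
    rw [mul_inv, ← inv_eq_sq_of_pow_three_eq_one hω.pow_eq_one, inv_inv]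
  rw [cycleRoots, kummerParam_add_one hω, hinv, image_joukowski_inv, add_one_sq_add_add_one,
    CharTwo.add_sq, one_pow]

theorem joukowski_injOn_fixedRoots (hω : IsPrimitiveRoot ω 3) (hb : b ^ 4 ≠ b) :
    Set.InjOn (joukowski 0 1) {v | v ^ 3 = kummerParam ω b} :=
  joukowski_injOn one_ne_zero three_ne_zero (kummerParam_ne_zero hω hb)
    (kummerParam_sq_ne_one hω hb)

theorem joukowski_injOn_cycleRoots (hω : IsPrimitiveRoot ω 3) (hb : b ^ 4 ≠ b) :
    Set.InjOn (joukowski (b ^ 2 + b + 1) (b ^ 2)) {v | v ^ 3 = ω * kummerParam ω b} := by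
  have hb0 : b ≠ 0 := by rintro rfl; simp at hb
  exact joukowski_injOn (pow_ne_zero 2 hb0) three_ne_zero
    (omega_mul_kummerParam_ne_zero hω hb)
    (omega_mul_kummerParam_sq_ne_one hω hb)

theorem fixedRoots_subset_threePeriodicPoints (hω : IsPrimitiveRoot ω 3) (hb : b ^ 4 ≠ b) :
    fixedRoots ω b ⊆ threePeriodicPoints (b ^ 2 + b + 1)⁻¹ := by
  rintro _ ⟨v, hv, rfl⟩
  have hstep := trinomialStep_fixed hω hb hv
  exact ⟨_, _, hstep, hstep, hstep⟩

theorem cycleRoots_subset_threePeriodicPoints (hω : IsPrimitiveRoot ω 3) (hb : b ^ 4 ≠ b) :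
    cycleRoots ω b ⊆ threePeriodicPoints (b ^ 2 + b + 1)⁻¹ := by
  rintro _ ⟨v, hv : v ^ 3 = _, rfl⟩
  have hωv := (mul_pow_of_pow_eq_one hω.pow_eq_one v).trans hv
  have hωωv := (mul_pow_of_pow_eq_one hω.pow_eq_one (ω * v)).trans hωv
  have hback : ω * (ω * (ω * v)) = v := by
    rw [← mul_assoc, ← mul_assoc, ← pow_three', hω.pow_eq_one, one_mul]
  have hlast := trinomialStep_cycle hω hb hωωv
  rw [hback] at hlast
  exact ⟨_, _, trinomialStep_cycle hω hb hv, trinomialStep_cycle hω hb hωv, hlast⟩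

theorem orbit_sum_of_mem_cycleRoots (hω : IsPrimitiveRoot ω 3) (hb : b ^ 4 ≠ b)
    (hx : x ∈ cycleRoots ω b) (hxy : TrinomialStep (b ^ 2 + b + 1)⁻¹ x y)
    (hyz : TrinomialStep (b ^ 2 + b + 1)⁻¹ y z) : x + y + z = 3 * (b ^ 2 + b + 1) / b ^ 2 := by
  obtain ⟨v, hv : v ^ 3 = _, rfl⟩ := hx
  have ha0 := inv_ne_zero (sq_add_self_add_one_ne_zero hω hb)
  obtain rfl := hxy.right_unique ha0 (trinomialStep_cycle hω hb hv)
  obtain rfl := hyz.right_unique ha0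
    (trinomialStep_cycle hω hb ((mul_pow_of_pow_eq_one hω.pow_eq_one v).trans hv))
  exact joukowski_orbit_sum hω _ _ v

theorem disjoint_fixedRoots_cycleRoots (hω : IsPrimitiveRoot ω 3) (hb : b ^ 4 ≠ b) :
    Disjoint (fixedRoots ω b) (cycleRoots ω b) := by
  rw [Set.disjoint_left]
  rintro _ ⟨w, hw, rfl⟩ ⟨v, hv : v ^ 3 = _, hvw⟩
  have hv0 : v ≠ 0 := ne_zero_of_pow_eq three_ne_zero (omega_mul_kummerParam_ne_zero hω hb) hv
  have hfix := trinomialStep_fixed hω hb hw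
  rw [← hvw] at hfix
  have himage := hfix.right_unique (inv_ne_zero (sq_add_self_add_one_ne_zero hω hb))
    (trinomialStep_cycle hω hb hv)
  have hωv : v = ω * v := joukowski_injOn_cycleRoots hω hb hv
    ((mul_pow_of_pow_eq_one hω.pow_eq_one v).trans hv) himage
  exact hω.ne_one (by norm_num) (mul_eq_right₀ hv0 |>.1 hωv.symm)

theorem disjoint_fixedRoots_cycleRoots_add_one (hω : IsPrimitiveRoot ω 3) (hb : b ^ 4 ≠ b) :
    Disjoint (fixedRoots ω b) (cycleRoots ω (b + 1)) := by
  rw [← fixedRoots_add_one hω]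
  exact disjoint_fixedRoots_cycleRoots hω (add_one_pow_four_ne hb)

theorem three_eq_one : (3 : F) = 1 := by
  rw [← two_add_one_eq_three, CharTwo.two_eq_zero, zero_add]

theorem disjoint_cycleRoots_cycleRoots_add_one (hω : IsPrimitiveRoot ω 3) (hb : b ^ 4 ≠ b) :
    Disjoint (cycleRoots ω b) (cycleRoots ω (b + 1)) := by
  rw [Set.disjoint_left]
  intro x hx hx'
  obtain ⟨y, z, hxy, hyz, -⟩ := cycleRoots_subset_threePeriodicPoints hω hb hx
  have hsum := orbit_sum_of_mem_cycleRoots hω hb hx hxy hyz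
  have hsum' := orbit_sum_of_mem_cycleRoots hω (add_one_pow_four_ne hb) hx'
    (by rwa [add_one_sq_add_add_one]) (by rwa [add_one_sq_add_add_one])
  rw [hsum, add_one_sq_add_add_one, div_eq_mul_inv, div_eq_mul_inv] at hsum'
  have hnum : (3 : F) * (b ^ 2 + b + 1) ≠ 0 := by
    rw [three_eq_one, one_mul]
    exact sq_add_self_add_one_ne_zero hω hb
  have hsq : b ^ 2 = (b + 1) ^ 2 := inv_injective (mul_left_cancel₀ hnum hsum')
  simpa using CharTwo.sq_inj.1 hsq

variable [IsSepClosed F]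

theorem exists_pow_three_eq (d : F) : ∃ v, v ^ 3 = d := by
  have : NeZero ((3 : ℕ) : F) := ⟨by
    rw [Nat.cast_ofNat, three_eq_one]
    exact one_ne_zero⟩
  exact IsSepClosed.exists_pow_nat_eq d 3

theorem ncard_fixedRoots (hω : IsPrimitiveRoot ω 3) (hb : b ^ 4 ≠ b) :
    (fixedRoots ω b).ncard = 3 := by
  obtain ⟨v, hv⟩ := exists_pow_three_eq (kummerParam ω b)
  rw [fixedRoots, (joukowski_injOn_fixedRoots hω hb).ncard_image,
    ncard_setOf_pow_eq hω three_pos (kummerParam_ne_zero hω hb) hv]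

theorem ncard_cycleRoots (hω : IsPrimitiveRoot ω 3) (hb : b ^ 4 ≠ b) :
    (cycleRoots ω b).ncard = 3 := by
  obtain ⟨v, hv⟩ := exists_pow_three_eq (ω * kummerParam ω b)
  rw [cycleRoots, (joukowski_injOn_cycleRoots hω hb).ncard_image, ncard_setOf_pow_eq hω three_pos
    (omega_mul_kummerParam_ne_zero hω hb) hv]

theorem threePeriodicPoints_eq (hω : IsPrimitiveRoot ω 3) (hb : b ^ 4 ≠ b) :
    threePeriodicPoints (b ^ 2 + b + 1)⁻¹ =
      fixedRoots ω b ∪ cycleRoots ω b ∪ cycleRoots ω (b + 1) := by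
  have hb' := add_one_pow_four_ne hb
  obtain ⟨hfin, hcard⟩ :=
    threePeriodicPoints_finite_and_ncard_le (inv_ne_zero (sq_add_self_add_one_ne_zero hω hb))
  have hsub0 := fixedRoots_subset_threePeriodicPoints hω hb
  have hsub1 := cycleRoots_subset_threePeriodicPoints hω hb
  have hsub2 := cycleRoots_subset_threePeriodicPoints hω hb'
  rw [add_one_sq_add_add_one] at hsub2
  have hdisj := (disjoint_fixedRoots_cycleRoots_add_one hω hb).union_left
    (disjoint_cycleRoots_cycleRoots_add_one hω hb)
  refine (Set.eq_of_subset_of_ncard_le (Set.union_subset (Set.union_subset hsub0 hsub1) hsub2)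
    ?_ hfin).symm
  rwa [Set.ncard_union_eq hdisj ((hfin.subset hsub0).union (hfin.subset hsub1))
      (hfin.subset hsub2), Set.ncard_union_eq (disjoint_fixedRoots_cycleRoots hω hb)
      (hfin.subset hsub0) (hfin.subset hsub1), ncard_fixedRoots hω hb, ncard_cycleRoots hω hb,
    ncard_cycleRoots hω hb']

end PeriodicPoints

section CyclicRoots

variable {F : Type*} [Field F] {σ : F →+* F} {b d v x ω : F} {n ℓ : ℕ}

theorem map_kummerParam (hω : IsPrimitiveRoot ω 3) {ε : ℤˣ} (hσω : σ ω = ω ^ (ε : ℤ))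
    (hσb : σ b = b) : σ (kummerParam ω b) = kummerParam ω b ^ (ε : ℤ) := by
  rw [kummerParam, map_div₀, map_add, map_add, map_pow, hσb, hσω]
  rcases Int.units_eq_one_or ε with rfl | rfl
  · simp
  · have hωinv := inv_eq_sq_of_pow_three_eq_one hω.pow_eq_one
    simp only [Units.val_neg, Units.val_one, zpow_neg, zpow_one, inv_div, inv_pow, ← hωinv,
      inv_inv]

theorem map_map_kummerParam (hω : IsPrimitiveRoot ω 3) (hσb : σ b = b) :
    σ (σ (kummerParam ω b)) = kummerParam ω b := by
  obtain ⟨ε, hσω⟩ := exists_units_map_eq_zpow hω σ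
  exact map_map_eq_self (map_kummerParam hω hσω hσb)

theorem map_map_eq_pow_mul (hσσ : ∀ v, σ (σ v) = v ^ (3 * n + 1)) (hv : v ^ 3 = d) :
    σ (σ v) = d ^ n * v := by
  rw [hσσ, pow_succ, pow_mul, hv]

theorem pow_pow_three_eq_one_of_map_map_eq_self (hσσ : ∀ v, σ (σ v) = v ^ (3 * n + 1))
    (hd0 : d ≠ 0) (hd : σ (σ d) = d) : (d ^ n) ^ 3 = 1 := by
  refine mul_right_cancel₀ hd0 ?_
  rw [one_mul, ← pow_mul, mul_comm n, ← pow_succ, ← hσσ, hd]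

theorem pow_six_apply_eq_self (hσσ : ∀ v, σ (σ v) = v ^ (3 * n + 1)) (hd0 : d ≠ 0)
    (hd : σ (σ d) = d) (hv : v ^ 3 = d) : (σ ^ 6) v = v := by
  have hζ3 := pow_pow_three_eq_one_of_map_map_eq_self hσσ hd0 hd
  have hζ : σ (σ (d ^ n)) = d ^ n := by rw [map_pow, map_pow, hd]
  calc (σ ^ 6) v = σ (σ (σ (σ (σ (σ v))))) := rfl
    _ = (d ^ n) ^ 3 * v := by
      simp only [map_map_eq_pow_mul hσσ hv, map_mul, hζ]
      ring
    _ = v := by rw [hζ3, one_mul]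

theorem image_joukowski_eq_setOf_pow_six (hσσ : ∀ v, σ (σ v) = v ^ (3 * n + 1)) (hd0 : d ≠ 0)
    (hd : σ (σ d) = d) (s t : F) :
    joukowski s t '' {v | v ^ 3 = d} =
      {x | ∃ v, (σ ^ 6) v = v ∧ v ^ 3 = d ∧ x = (s + v + v⁻¹) / t} := by
  ext x
  constructor
  · rintro ⟨v, hv, rfl⟩
    exact ⟨v, pow_six_apply_eq_self hσσ hd0 hd hv, hv, rfl⟩
  · rintro ⟨v, -, hv, rfl⟩
    exact ⟨v, hv, rfl⟩

variable [CharP F 2]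

theorem mem_cyclicRoots_iff_of_mem_fixedRoots (hω : IsPrimitiveRoot ω 3) (hb : b ^ 4 ≠ b)
    (hσb : σ b = b) (hσσ : ∀ v, σ (σ v) = v ^ (3 * n + 1)) (hx : x ∈ fixedRoots ω b) :
    x ∈ cyclicRoots σ ℓ (b ^ 2 + b + 1)⁻¹ ↔ (kummerParam ω b ^ n) ^ ℓ = 1 := by
  obtain ⟨v, hv : v ^ 3 = _, rfl⟩ := hx
  obtain ⟨ε, hσω⟩ := exists_units_map_eq_zpow hω σ
  have hv0 := ne_zero_of_pow_eq three_ne_zero (kummerParam_ne_zero hω hb) hv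
  have hstep := trinomialStep_fixed hω hb hv
  rw [← mul_one (_ ^ ℓ)]
  refine joukowski_mem_cyclicRoots_iff hω hσω (map_zero σ) (map_one σ) hv0
    (hv ▸ map_kummerParam hω hσω hσb) (map_map_eq_pow_mul hσσ hv)
    (inv_ne_zero (sq_add_self_add_one_ne_zero hω hb)) (one_pow 3)
    (hv ▸ joukowski_injOn_fixedRoots hω hb) ?_ ℓ
  rwa [one_mul]

theorem mem_cyclicRoots_iff_of_mem_cycleRoots (hω : IsPrimitiveRoot ω 3) (hb : b ^ 4 ≠ b)
    (hσb : σ b = b) (hσσ : ∀ v, σ (σ v) = v ^ (3 * n + 1)) (hx : x ∈ cycleRoots ω b) :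
    x ∈ cyclicRoots σ ℓ (b ^ 2 + b + 1)⁻¹ ↔ ((ω * kummerParam ω b) ^ n) ^ ℓ * ω = 1 := by
  obtain ⟨v, hv : v ^ 3 = _, rfl⟩ := hx
  obtain ⟨ε, hσω⟩ := exists_units_map_eq_zpow hω σ
  have hσv : σ (v ^ 3) = (v ^ 3) ^ (ε : ℤ) := by
    rw [hv, map_mul, hσω, map_kummerParam hω hσω hσb, mul_zpow]
  exact joukowski_mem_cyclicRoots_iff hω hσω (by simp [hσb]) (by simp [hσb])
    (ne_zero_of_pow_eq three_ne_zero (omega_mul_kummerParam_ne_zero hω hb) hv) hσv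
    (map_map_eq_pow_mul hσσ hv) (inv_ne_zero (sq_add_self_add_one_ne_zero hω hb))
    hω.pow_eq_one (hv ▸ joukowski_injOn_cycleRoots hω hb) (trinomialStep_cycle hω hb hv) ℓ

theorem mem_cyclicRoots_iff_of_mem_cycleRoots_add_one (hω : IsPrimitiveRoot ω 3) (hb : b ^ 4 ≠ b)
    (hσb : σ b = b) (hσσ : ∀ v, σ (σ v) = v ^ (3 * n + 1)) (hx : x ∈ cycleRoots ω (b + 1)) :
    x ∈ cyclicRoots σ ℓ (b ^ 2 + b + 1)⁻¹ ↔ ((ω ^ 2 * kummerParam ω b) ^ n) ^ ℓ * ω ^ 2 = 1 := by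
  have hiff := mem_cyclicRoots_iff_of_mem_cycleRoots (ℓ := ℓ) hω (add_one_pow_four_ne hb)
    (by rw [map_add, hσb, map_one]) hσσ hx
  rw [add_one_sq_add_add_one, kummerParam_add_one hω] at hiff
  rw [hiff, ← inv_eq_one, mul_inv, ← inv_pow, ← inv_pow, mul_inv, inv_inv,
    inv_eq_sq_of_pow_three_eq_one hω.pow_eq_one]

variable [IsSepClosed F]

theorem exists_map_map_eq_self_and_pow_three_eq_iff (hσσ : ∀ v, σ (σ v) = v ^ (3 * n + 1))
    (hd0 : d ≠ 0) : (∃ v, σ (σ v) = v ∧ v ^ 3 = d) ↔ d ^ n = 1 := by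
  have hfixed_iff {v : F} (hv : v ^ 3 = d) : σ (σ v) = v ↔ d ^ n = 1 := by
    rw [map_map_eq_pow_mul hσσ hv, mul_eq_right₀ (ne_zero_of_pow_eq three_ne_zero hd0 hv)]
  constructor
  · rintro ⟨v, hfixed, hv⟩
    exact (hfixed_iff hv).1 hfixed
  · intro hdn
    obtain ⟨v, hv⟩ := exists_pow_three_eq d
    exact ⟨v, (hfixed_iff hv).2 hdn, hv⟩

theorem mem_cyclicRoots_iff (hω : IsPrimitiveRoot ω 3) (hb : b ^ 4 ≠ b)
    (hσb : σ b = b) (hσσ : ∀ v, σ (σ v) = v ^ (3 * n + 1)) :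
    x ∈ cyclicRoots σ ℓ (b ^ 2 + b + 1)⁻¹ ↔
      x ∈ fixedRoots ω b ∧ (kummerParam ω b ^ n) ^ ℓ = 1 ∨
      x ∈ cycleRoots ω b ∧ ((ω * kummerParam ω b) ^ n) ^ ℓ * ω = 1 ∨
      x ∈ cycleRoots ω (b + 1) ∧ ((ω ^ 2 * kummerParam ω b) ^ n) ^ ℓ * ω ^ 2 = 1 := by
  rw [← and_congr_right fun hx ↦ mem_cyclicRoots_iff_of_mem_fixedRoots hω hb hσb hσσ hx,
    ← and_congr_right fun hx ↦ mem_cyclicRoots_iff_of_mem_cycleRoots hω hb hσb hσσ hx,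
    ← and_congr_right fun hx ↦ mem_cyclicRoots_iff_of_mem_cycleRoots_add_one hω hb hσb hσσ hx,
    ← or_and_right, ← or_and_right, ← or_assoc]
  refine (and_iff_right_of_imp fun hx ↦ ?_).symm
  have hσa : σ (b ^ 2 + b + 1)⁻¹ = (b ^ 2 + b + 1)⁻¹ := by simp [hσb]
  have hx' := cyclicRoots_subset_threePeriodicPoints hσa ℓ hx
  rwa [threePeriodicPoints_eq hω hb] at hx'

theorem cyclicRoots_eq_fixedRoots (hω : IsPrimitiveRoot ω 3) (hb : b ^ 4 ≠ b) (hσb : σ b = b)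
    (hσσ : ∀ v, σ (σ v) = v ^ (3 * n + 1)) (hn : ω ^ n = 1)
    (hc : (kummerParam ω b ^ n) ^ ℓ = 1) :
    cyclicRoots σ ℓ (b ^ 2 + b + 1)⁻¹ = fixedRoots ω b := by
  ext x
  have hω2 : ω ^ 2 ≠ 1 := hω.pow_ne_one_of_pos_of_lt two_ne_zero (by norm_num)
  simp [mem_cyclicRoots_iff hω hb hσb hσσ, mul_pow, pow_right_comm ω 2, hn, hc, hω2,
    hω.ne_one (by norm_num)]

theorem cyclicRoots_eq_cycleRoots (hω : IsPrimitiveRoot ω 3) (hb : b ^ 4 ≠ b) (hσb : σ b = b)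
    (hσσ : ∀ v, σ (σ v) = v ^ (3 * n + 1)) (hn : ω ^ n = 1)
    (hc : (kummerParam ω b ^ n) ^ ℓ * ω = 1) :
    cyclicRoots σ ℓ (b ^ 2 + b + 1)⁻¹ = cycleRoots ω b := by
  ext x
  have hω1 : ω ≠ 1 := hω.ne_one (by norm_num)
  have hc0 : (kummerParam ω b ^ n) ^ ℓ ≠ 1 := by
    intro h
    exact hω1 (by rwa [h, one_mul] at hc)
  simp [mem_cyclicRoots_iff hω hb hσb hσσ, mul_pow, hn, hc, hc0, sq ω, ← mul_assoc, hω1]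

theorem cyclicRoots_eq_cycleRoots_add_one (hω : IsPrimitiveRoot ω 3) (hb : b ^ 4 ≠ b)
    (hσb : σ b = b) (hσσ : ∀ v, σ (σ v) = v ^ (3 * n + 1)) (hn : ω ^ n = 1)
    (hc : (kummerParam ω b ^ n) ^ ℓ * ω ^ 2 = 1) :
    cyclicRoots σ ℓ (b ^ 2 + b + 1)⁻¹ = cycleRoots ω (b + 1) := by
  rw [← add_one_sq_add_add_one]
  refine cyclicRoots_eq_cycleRoots hω (add_one_pow_four_ne hb) (by simp [hσb]) hσσ hn ?_
  rw [kummerParam_add_one hω, inv_pow, inv_pow, eq_inv_of_mul_eq_one_left hc, inv_inv, ← pow_succ,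
    hω.pow_eq_one]

theorem exists_cyclicRoots_eq_cycleRoots (hω : IsPrimitiveRoot ω 3) (hb : b ^ 4 ≠ b)
    (hσb : σ b = b) (hσσ : ∀ v, σ (σ v) = v ^ (3 * n + 1)) (hn : ω ^ n = 1) (hℓ : ¬ 3 ∣ ℓ)
    (hc : kummerParam ω b ^ n ≠ 1) :
    ∃ k, (k = 1 ∨ k = 2) ∧
      (∀ j, j = 1 ∨ j = 2 → (kummerParam ω b ^ n = (ω ^ (j * ℓ))⁻¹ ↔ j = k)) ∧
      cyclicRoots σ ℓ (b ^ 2 + b + 1)⁻¹ =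
        if k = 1 then cycleRoots ω b else cycleRoots ω (b + 1) := by
  have hc3 := pow_pow_three_eq_one_of_map_map_eq_self hσσ (kummerParam_ne_zero hω hb)
    (map_map_kummerParam hω hσb)
  have hiff := eq_inv_pow_mul_iff hω hc3 hℓ
  have hcℓ : (kummerParam ω b ^ n) ^ ℓ ≠ 1 := by simpa using (hiff 0).not.1 (by simpa using hc)
  obtain ⟨k, hk, hjk⟩ := exists_forall_pow_mul_eq_one_iff hω
    (by rw [pow_right_comm, hc3, one_pow]) hcℓ
  refine ⟨k, hk, fun j hj ↦ (hiff j).trans (hjk j hj), ?_⟩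
  have hck := (hjk k hk).2 rfl
  rcases hk with rfl | rfl
  · exact cyclicRoots_eq_cycleRoots hω hb hσb hσσ hn (by rwa [pow_one] at hck)
  · exact cyclicRoots_eq_cycleRoots_add_one hω hb hσb hσσ hn hck

end CyclicRoots

section Frobenius

variable {F : Type*} [Field F] {a b ω : F} {m : ℕ}

theorem two_pow_sq_modEq_three (m : ℕ) : (2 ^ m) ^ 2 ≡ 1 [MOD 3] := by
  rw [pow_right_comm]
  simpa using (show 2 ^ 2 ≡ 1 [MOD 3] from rfl).pow m

theorem two_pow_sq_modEq_nine (hm : 3 ∣ m) : (2 ^ m) ^ 2 ≡ 1 [MOD 9] := by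
  obtain ⟨t, rfl⟩ := hm
  rw [pow_mul, pow_right_comm]
  simpa using (show (2 ^ 3) ^ 2 ≡ 1 [MOD 9] from rfl).pow t

theorem pow_two_pow_sq_sub_one_div_three_eq_one (hω : ω ^ 3 = 1) (hm : 3 ∣ m) :
    ω ^ (((2 ^ m) ^ 2 - 1) / 3) = 1 := by
  have hdvd : 3 ∣ ((2 ^ m) ^ 2 - 1) / 3 := by
    have hmod := two_pow_sq_modEq_nine hm
    rw [Nat.ModEq] at hmod
    lia
  obtain ⟨t, ht⟩ := hdvd
  rw [ht, pow_mul, hω, one_pow]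

variable [CharP F 2]

theorem iterateFrobenius_pow_apply (m j : ℕ) (x : F) :
    (iterateFrobenius F 2 m ^ j) x = x ^ (2 ^ m) ^ j := by
  rw [iterateFrobenius_eq_pow, ← pow_mul, ← iterateFrobenius_eq_pow, iterateFrobenius_def, pow_mul]

theorem eq_inv_of_sq_add_self_eq (hb : b ^ 2 + b = a⁻¹ + 1) : a = (b ^ 2 + b + 1)⁻¹ := by
  rw [hb, add_assoc, CharTwo.add_self_eq_zero, add_zero, inv_inv]

theorem pow_four_ne_of_sq_add_self_eq (ha : a ^ 2 ≠ a) (hb : b ^ 2 + b = a⁻¹ + 1) :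
    b ^ 4 ≠ b := by
  intro hb4
  refine ha ?_
  rw [eq_inv_of_sq_add_self_eq hb, inv_pow, inv_inj]
  linear_combination hb4 + (b ^ 3 + b ^ 2 + b) * CharTwo.two_eq_zero (R := F)

theorem iterateFrobenius_apply_apply (m : ℕ) (x : F) :
    iterateFrobenius F 2 m (iterateFrobenius F 2 m x) = x ^ (3 * (((2 ^ m) ^ 2 - 1) / 3) + 1) := by
  have hexp : 3 * (((2 ^ m) ^ 2 - 1) / 3) + 1 = (2 ^ m) ^ 2 := by
    have hmod := two_pow_sq_modEq_three m
    rw [Nat.ModEq] at hmod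
    lia
  rw [hexp, ← iterateFrobenius_pow_apply, sq, RingHom.mul_def, RingHom.comp_apply]

theorem cyclicRoots_iterateFrobenius (m ℓ : ℕ) (a : F) :
    cyclicRoots (iterateFrobenius F 2 m) ℓ a =
      {x | x ^ (2 ^ m) ^ 3 = x ∧ x ^ (2 * (2 ^ m) ^ ℓ + 1) + x + a = 0} := by
  ext x
  simp only [cyclicRoots, TrinomialStep, iterateFrobenius_pow_apply, Set.mem_ofPred_eq, pow_succ x,
    pow_mul' x 2]

theorem image_joukowski_eq_setOf_pow_two_pow {η : F} (hω : IsPrimitiveRoot ω 3) (hb : b ^ 4 ≠ b)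
    (hbm : b ^ 2 ^ m = b) (hη : η ^ 3 = 1) (s t : F) :
    joukowski s t '' {v | v ^ 3 = η * kummerParam ω b} =
      {x | ∃ v, v ^ (2 ^ m) ^ 6 = v ∧ v ^ 3 = η * kummerParam ω b ∧ x = (s + v + v⁻¹) / t} := by
  have hη0 : η ≠ 0 := ne_zero_of_pow_eq three_ne_zero one_ne_zero hη
  have hσb : iterateFrobenius F 2 m b = b := hbm
  simp only [← iterateFrobenius_pow_apply]
  refine image_joukowski_eq_setOf_pow_six (iterateFrobenius_apply_apply m)
    (mul_ne_zero hη0 (kummerParam_ne_zero hω hb)) ?_ s t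
  rw [map_mul, map_mul, map_map_eq_self_of_pow_three_eq_one hω hη, map_map_kummerParam hω hσb]

theorem fixedRoots_eq_setOf_pow_two_pow (hω : IsPrimitiveRoot ω 3) (hb : b ^ 4 ≠ b)
    (hbm : b ^ 2 ^ m = b) :
    fixedRoots ω b =
      {x | ∃ v, v ^ (2 ^ m) ^ 6 = v ∧ v ^ 3 = kummerParam ω b ∧ x = v + v⁻¹} := by
  simpa [fixedRoots] using image_joukowski_eq_setOf_pow_two_pow hω hb hbm (one_pow 3) 0 1

theorem cycleRoots_eq_setOf_pow_two_pow (hω : IsPrimitiveRoot ω 3) (hb : b ^ 4 ≠ b)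
    (hbm : b ^ 2 ^ m = b) :
    cycleRoots ω b = {x | ∃ v, v ^ (2 ^ m) ^ 6 = v ∧ v ^ 3 = ω * kummerParam ω b ∧
      x = (b ^ 2 + b + 1 + v + v⁻¹) / b ^ 2} :=
  image_joukowski_eq_setOf_pow_two_pow hω hb hbm hω.pow_eq_one _ _

theorem cycleRoots_add_one_eq_setOf_pow_two_pow (hω : IsPrimitiveRoot ω 3) (hb : b ^ 4 ≠ b)
    (hbm : b ^ 2 ^ m = b) :
    cycleRoots ω (b + 1) = {x | ∃ v, v ^ (2 ^ m) ^ 6 = v ∧ v ^ 3 = ω ^ 2 * kummerParam ω b ∧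
      x = (b ^ 2 + b + 1 + v + v⁻¹) / (b ^ 2 + 1)} := by
  have hω2 : (ω ^ 2) ^ 3 = 1 := by rw [pow_right_comm, hω.pow_eq_one, one_pow]
  rw [cycleRoots_add_one hω, image_joukowski_eq_setOf_pow_two_pow hω hb hbm hω2]

theorem exists_pow_two_pow_sq_eq_self_and_pow_three_eq_iff [IsSepClosed F] (m : ℕ) {d : F}
    (hd0 : d ≠ 0) :
    (∃ v, v ^ (2 ^ m) ^ 2 = v ∧ v ^ 3 = d) ↔ d ^ (((2 ^ m) ^ 2 - 1) / 3) = 1 := by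
  simp only [← iterateFrobenius_pow_apply]
  exact exists_map_map_eq_self_and_pow_three_eq_iff (iterateFrobenius_apply_apply m) hd0

end Frobenius

theorem roots_description_m_div_three_general
    {F : Type*} [Field F] [CharP F 2] [IsSepClosed F]
    (m ℓ : ℕ) (hℓ3 : ¬ 3 ∣ ℓ)
    (q : ℕ) (hq : q = 2 ^ m)
    (a : F) (ha2 : a ^ 2 ≠ a)
    (ω : F) (hω4 : ω ^ 4 = ω) (hω2 : ω ^ 2 ≠ ω)
    (b : F) (hbq : b ^ q = b) (hb : b ^ 2 + b = a⁻¹ + 1)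
    (c : F) (hc : c = (b + ω) / (b + ω ^ 2))
    (Γ : Set F)
    (hΓ : Γ = {x : F | x ^ q ^ 3 = x ∧ x ^ (2 * q ^ ℓ + 1) + x + a = 0})
    (Λ0 Λ1 Λ2 : Set F)
    (hΛ0 : Λ0 = {x : F | ∃ v : F, v ^ q ^ 6 = v ∧ v ^ 3 = c ∧ x = v + v⁻¹})
    (hΛ1 : Λ1 = {x : F | ∃ v : F, v ^ q ^ 6 = v ∧ v ^ 3 = ω * c ∧
      x = (a⁻¹ + v + v⁻¹) / b ^ 2})
    (hΛ2 : Λ2 = {x : F | ∃ v : F, v ^ q ^ 6 = v ∧ v ^ 3 = ω ^ 2 * c ∧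
      x = (a⁻¹ + v + v⁻¹) / (b ^ 2 + 1)}) :
    b ^ 4 ≠ b ∧
    Λ0.ncard = 3 ∧ Λ1.ncard = 3 ∧ Λ2.ncard = 3 ∧
    Disjoint Λ0 Λ1 ∧ Disjoint Λ0 Λ2 ∧ Disjoint Λ1 Λ2 ∧
    (m % 3 = 0 → (∃ y : F, y ^ q ^ 2 = y ∧ y ^ 3 = c) → Γ = Λ0) ∧
    (m % 3 = 0 → ¬ (∃ y : F, y ^ q ^ 2 = y ∧ y ^ 3 = c) →
      ∃ k : ℕ, (k = 1 ∨ k = 2) ∧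
        (∀ j : ℕ, (j = 1 ∨ j = 2) →
          (c ^ ((q ^ 2 - 1) / 3) = (ω ^ (j * ℓ))⁻¹ ↔ j = k)) ∧
        Γ = (if k = 1 then Λ1 else Λ2)) := by
  subst hq
  obtain rfl := eq_inv_of_sq_add_self_eq hb
  obtain rfl : c = kummerParam ω b := hc
  have hω := isPrimitiveRoot_three_of_pow_four_eq hω4 hω2
  have hb4 := pow_four_ne_of_sq_add_self_eq ha2 hb
  have hb4' := add_one_pow_four_ne hb4
  have hσσ := iterateFrobenius_apply_apply (F := F) m
  have hωn (hm : m % 3 = 0) := pow_two_pow_sq_sub_one_div_three_eq_one hω.pow_eq_one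
    (Nat.dvd_of_mod_eq_zero hm)
  have hcube_iff :=
    exists_pow_two_pow_sq_eq_self_and_pow_three_eq_iff m (kummerParam_ne_zero hω hb4)
  rw [inv_inv] at hΛ1 hΛ2
  rw [← fixedRoots_eq_setOf_pow_two_pow hω hb4 hbq] at hΛ0
  rw [← cycleRoots_eq_setOf_pow_two_pow hω hb4 hbq] at hΛ1
  rw [← cycleRoots_add_one_eq_setOf_pow_two_pow hω hb4 hbq] at hΛ2
  rw [← cyclicRoots_iterateFrobenius] at hΓ
  subst hΓ hΛ0 hΛ1 hΛ2
  refine ⟨hb4, ncard_fixedRoots hω hb4, ncard_cycleRoots hω hb4, ncard_cycleRoots hω hb4',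
    disjoint_fixedRoots_cycleRoots hω hb4, disjoint_fixedRoots_cycleRoots_add_one hω hb4,
    disjoint_cycleRoots_cycleRoots_add_one hω hb4, fun hm hcube ↦ ?_, fun hm hcube ↦ ?_⟩
  · refine cyclicRoots_eq_fixedRoots hω hb4 hbq hσσ (hωn hm) ?_
    rw [hcube_iff.1 hcube, one_pow]
  · exact exists_cyclicRoots_eq_cycleRoots hω hb4 hbq hσσ (hωn hm) hℓ3 (hcube_iff.not.1 hcube)

/-- Theorem 1.3, parts on `b ∉ F_4`, disjointness and sizes of the `Λ_i`, and the
determination of `Γ_ℓ` when `m ≡ 0 (mod 3)`. -/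
theorem roots_description_m_div_three
    (m ℓ : ℕ) (hm : 0 < m) (hℓ : 0 < ℓ) (hℓ3 : ¬ 3 ∣ ℓ)
    (q : ℕ) (hq : q = 2 ^ m)
    (a : K) (haq : a ^ q = a) (ha2 : a ^ 2 ≠ a)
    (htr : ∑ i ∈ Finset.range m, a⁻¹ ^ 2 ^ i = (m : K))
    (ω : K) (hω4 : ω ^ 4 = ω) (hω2 : ω ^ 2 ≠ ω)
    (b : K) (hbq : b ^ q = b) (hb : b ^ 2 + b = a⁻¹ + 1)
    (c : K) (hc : c = (b + ω) / (b + ω ^ 2))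
    (Γ : Set K)
    (hΓ : Γ = {x : K | x ^ q ^ 3 = x ∧ x ^ (2 * q ^ ℓ + 1) + x + a = 0})
    (Λ0 Λ1 Λ2 : Set K)
    (hΛ0 : Λ0 = {x : K | ∃ v : K, v ^ q ^ 6 = v ∧ v ^ 3 = c ∧ x = v + v⁻¹})
    (hΛ1 : Λ1 = {x : K | ∃ v : K, v ^ q ^ 6 = v ∧ v ^ 3 = ω * c ∧
      x = (a⁻¹ + v + v⁻¹) / b ^ 2})
    (hΛ2 : Λ2 = {x : K | ∃ v : K, v ^ q ^ 6 = v ∧ v ^ 3 = ω ^ 2 * c ∧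
      x = (a⁻¹ + v + v⁻¹) / (b ^ 2 + 1)}) :
    b ^ 4 ≠ b ∧
    Λ0.ncard = 3 ∧ Λ1.ncard = 3 ∧ Λ2.ncard = 3 ∧
    Disjoint Λ0 Λ1 ∧ Disjoint Λ0 Λ2 ∧ Disjoint Λ1 Λ2 ∧
    (m % 3 = 0 → (∃ y : K, y ^ q ^ 2 = y ∧ y ^ 3 = c) → Γ = Λ0) ∧
    (m % 3 = 0 → ¬ (∃ y : K, y ^ q ^ 2 = y ∧ y ^ 3 = c) →
      ∃ k : ℕ, (k = 1 ∨ k = 2) ∧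
        (∀ j : ℕ, (j = 1 ∨ j = 2) →
          (c ^ ((q ^ 2 - 1) / 3) = (ω ^ (j * ℓ))⁻¹ ↔ j = k)) ∧
        Γ = (if k = 1 then Λ1 else Λ2)) :=
  roots_description_m_div_three_general m ℓ hℓ3 q hq a ha2 ω hω4 hω2 b hbq hb c hc Γ hΓ Λ0 Λ1 Λ2
    hΛ0 hΛ1 hΛ2
end

section
/- If m is not congruent to 0 modulo 3, then there is a unique k ∈ {0,1,2} for which ω^k·c is a cube in F_{q²}; moreover this value k satisfies: if k = 0 and ℓ ≡ m (mod 3) then Γ_ℓ = Λ_0; if k ≠ 0 and ℓ ≡ m (mod 3) then Γ_ℓ = Λ_{3−k}; if k = 0 and ℓ ≡ −m (mod 3) then Γ_ℓ = Λ; and if k ≠ 0 and ℓ ≡ −m (mod 3) then Γ_ℓ = ∅. -/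
open Polynomial

local notation "K" => AlgebraicClosure (ZMod 2)

/-!
A root `x` of `X ^ (2 q^ℓ + 1) + X + a` in `F_{q³}` and its conjugates `y = x ^ q^ℓ`, `z = y ^ q^ℓ`
satisfy the cyclic system `x (y + 1)² = y (z + 1)² = z (x + 1)² = a`. Eliminating `y` and `z` leaves
a polynomial of degree nine in `x`, which splits into three cubics with roots the sets `Λ_j`: after
an affine substitution the `j`-th cubic reads `t³ + t = d + d⁻¹` with `d = ω^j c`, and it is solved
by `t = v + v⁻¹` with `v³ = d`.

Conversely, the point `x_v` of `Λ_j` attached to `v` satisfies `x_v (x_{ω^j v} + 1)² = a`, so it is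
a root of the trinomial exactly when `x ↦ x ^ q^ℓ` acts on it as `v ↦ ω^j v`. Up to inversion of
`v`, the map `x ↦ x ^ q` acts as `v ↦ v ^ (-2)^m = ω^(i - m j) v` for an index `i` depending only
on `c`, whence `Γ_ℓ` is the union of those `Λ_j` for which `ℓ (i - m j) = j` modulo 3.
-/

section TwistedFrobenius

variable {F : Type*} [Field F]

lemma zpow_neg_two_pow_of_even (v : F) {n : ℕ} (hn : Even n) : v ^ (-2 : ℤ) ^ n = v ^ 2 ^ n := by
  rw [hn.neg_pow]
  exact_mod_cast zpow_natCast v (2 ^ n)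

lemma zpow_neg_two_pow_of_odd (v : F) {n : ℕ} (hn : Odd n) :
    v ^ (-2 : ℤ) ^ n = (v ^ 2 ^ n)⁻¹ := by
  rw [hn.neg_pow, zpow_neg]
  exact_mod_cast congrArg (·⁻¹) (zpow_natCast v (2 ^ n))

lemma add_inv_pow_two_pow [CharP F 2] (v : F) (n : ℕ) :
    (v + v⁻¹) ^ 2 ^ n = v ^ (-2 : ℤ) ^ n + (v ^ (-2 : ℤ) ^ n)⁻¹ := by
  rw [add_pow_char_pow, inv_pow]
  rcases n.even_or_odd with hn | hn
  · rw [zpow_neg_two_pow_of_even v hn]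
  · rw [zpow_neg_two_pow_of_odd v hn, inv_inv, add_comm]

lemma exists_neg_two_pow_eq (n : ℕ) : ∃ d : ℤ, (-2) ^ n = 1 - 3 * n + 9 * d := by
  induction n with
  | zero => exact ⟨0, by simp⟩
  | succ n ih =>
    obtain ⟨d, hd⟩ := ih
    exact ⟨n - 2 * d, by rw [pow_succ, hd]; push_cast; ring⟩

lemma zpow_neg_two_pow_of_pow_nine_eq_one {r : F} (hr : r ^ 9 = 1) (n : ℕ) :
    r ^ (-2 : ℤ) ^ n = r * ((r ^ 3) ^ n)⁻¹ := by
  have hr0 : r ≠ 0 := by rintro rfl; simp at hr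
  obtain ⟨d, hd⟩ := exists_neg_two_pow_eq n
  have hr9 : r ^ (9 : ℤ) = 1 := mod_cast hr
  have hr3 : r ^ (3 * n : ℤ) = (r ^ 3) ^ n := by
    rw [← pow_mul]
    exact_mod_cast zpow_natCast r (3 * n)
  rw [hd, zpow_add₀ hr0, zpow_mul r 9, hr9, one_zpow, mul_one, zpow_sub₀ hr0, zpow_one, hr3,
    div_eq_mul_inv]

lemma div_add_inv_zpow_neg_two_pow [CharP F 2] {b ω : F} {m : ℕ} (hb : b ^ 2 ^ m = b)
    (hω : ω ^ 3 = 1) :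
    ((b + ω) / (b + ω⁻¹)) ^ (-2 : ℤ) ^ m = (b + ω) / (b + ω⁻¹) := by
  have hωm : ω ^ (-2 : ℤ) ^ m = ω := by
    rw [zpow_neg_two_pow_of_pow_nine_eq_one (by rw [show 9 = 3 * 3 from rfl, pow_mul, hω, one_pow]),
      hω, one_pow, inv_one, mul_one]
  have hpow : ((b + ω) / (b + ω⁻¹)) ^ 2 ^ m = (b + ω ^ 2 ^ m) / (b + (ω ^ 2 ^ m)⁻¹) := by
    rw [div_pow, add_pow_char_pow, add_pow_char_pow, hb, inv_pow]
  rcases m.even_or_odd with hm | hm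
  · rw [zpow_neg_two_pow_of_even _ hm] at hωm ⊢
    rw [hpow, hωm]
  · rw [zpow_neg_two_pow_of_odd _ hm] at hωm ⊢
    rw [hpow, hωm, ← inv_eq_iff_eq_inv.2 hωm.symm, inv_div]

end TwistedFrobenius

lemma pow_pow_eq_self {M : Type*} [Monoid M] {x : M} {n : ℕ} (h : x ^ n = x) (r : ℕ) :
    x ^ n ^ r = x :=
  congrFun (pow_iterate n r) x ▸ Function.IsFixedPt.iterate h r

lemma eq_zero_or_one_or_two (j : ZMod 3) : j = 0 ∨ j = 1 ∨ j = 2 := by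
  decide +revert

lemma iUnion_zmod_three {α : Type*} (s : ZMod 3 → Set α) : ⋃ j, s j = s 0 ∪ s 1 ∪ s 2 := by
  refine subset_antisymm (Set.iUnion_subset fun j => ?_) (Set.union_subset (Set.union_subset
    (Set.subset_iUnion s 0) (Set.subset_iUnion s 1)) (Set.subset_iUnion s 2))
  obtain rfl | rfl | rfl := eq_zero_or_one_or_two j <;> grind

lemma natCast_zmod_eq_neg_iff {n a b : ℕ} : (a : ZMod n) = -b ↔ (a + b) % n = 0 := by
  rw [eq_neg_iff_add_eq_zero, ← Nat.cast_add, ZMod.natCast_eq_zero_iff, Nat.dvd_iff_mod_eq_zero]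

lemma mul_mul_sub_mul_eq_iff_of_ne_zero {μ : ZMod 3} (hμ : μ ≠ 0) (k j : ZMod 3) :
    μ * (μ * k - μ * j) = j ↔ j = -k := by
  decide +revert

lemma neg_mul_mul_sub_mul_eq_iff_of_ne_zero {μ : ZMod 3} (hμ : μ ≠ 0) (k j : ZMod 3) :
    -μ * (μ * k - μ * j) = j ↔ k = 0 := by
  decide +revert

section CubeRoots

variable {F : Type*} [Field F] {χ : AddChar (ZMod 3) F}

lemma addChar_pow_three (χ : AddChar (ZMod 3) F) (j : ZMod 3) : χ j ^ 3 = 1 := by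
  rw [← AddChar.map_nsmul_eq_pow, show 3 • j = 0 by decide +revert, AddChar.map_zero_eq_one]

lemma addChar_ne_zero (χ : AddChar (ZMod 3) F) (j : ZMod 3) : χ j ≠ 0 := (χ.val_isUnit j).ne_zero

lemma isPrimitiveRoot_addChar_one (hχ : Function.Injective χ) : IsPrimitiveRoot (χ 1) 3 := by
  have hne : χ 1 ≠ 1 := by
    rw [← AddChar.map_zero_eq_one χ, hχ.ne_iff]
    exact one_ne_zero
  exact IsPrimitiveRoot.iff_orderOf.2 (orderOf_eq_prime (addChar_pow_three χ 1) hne)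

lemma addChar_one_inv (χ : AddChar (ZMod 3) F) : (χ 1)⁻¹ = χ 1 ^ 2 :=
  inv_eq_of_mul_eq_one_right (by rw [← pow_succ', addChar_pow_three])

lemma addChar_two (χ : AddChar (ZMod 3) F) : χ 2 = (χ 1)⁻¹ := by
  rw [← AddChar.map_neg_eq_inv]
  rfl

lemma addChar_one_sq [CharP F 2] (hχ : Function.Injective χ) : χ 1 ^ 2 = χ 1 + 1 := by
  have hsum := (isPrimitiveRoot_addChar_one hχ).geom_sum_eq_zero (by norm_num)
  rw [Finset.sum_range_succ, CharTwo.add_eq_zero] at hsum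
  rw [← hsum, geom_sum_two]

lemma exists_eq_mul_addChar_of_pow_three_eq (hχ : Function.Injective χ) {v w : F}
    (h : v ^ 3 = w ^ 3) : ∃ i, v = w * χ i := by
  rcases eq_or_ne w 0 with rfl | hw
  · exact ⟨0, by simpa using h⟩
  obtain ⟨n, -, hn⟩ := (isPrimitiveRoot_addChar_one hχ).eq_pow_of_pow_eq_one
    (show (v / w) ^ 3 = 1 by rw [div_pow, h, div_self (pow_ne_zero 3 hw)])
  refine ⟨n • 1, ?_⟩
  rw [AddChar.map_nsmul_eq_pow, hn, mul_div_cancel₀ _ hw]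

lemma zpow_neg_two_pow_of_pow_three_eq_addChar {r : F} {j : ZMod 3} (hr : r ^ 3 = χ j) (n : ℕ) :
    r ^ (-2 : ℤ) ^ n = r * χ (-(n * j)) := by
  have hr9 : r ^ 9 = 1 := by rw [show 9 = 3 * 3 from rfl, pow_mul, hr, addChar_pow_three]
  rw [zpow_neg_two_pow_of_pow_nine_eq_one hr9, hr, ← AddChar.map_nsmul_eq_pow,
    ← AddChar.map_neg_eq_inv, nsmul_eq_mul]

/-- `i` is the Kummer index of `c` if the twisted Frobenius `v ↦ v ^ (-2) ^ m` permutes the cube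
roots `v` of `χ j * c` as multiplication by the cube root of unity `χ (i - m * j)`, for every `j`.
The exponent `(-2) ^ m` stands for `2 ^ m` or `-2 ^ m` according to the parity of `m`; the sign is
invisible on `v + v⁻¹` and makes the index independent of that parity. -/
def IsKummerIndex (χ : AddChar (ZMod 3) F) (c : F) (m : ℕ) (i : ZMod 3) : Prop :=
  ∀ (j : ZMod 3) (v : F), v ^ 3 = χ j * c → v ^ (-2 : ℤ) ^ m = v * χ (i - m * j)

/-- Cube roots of `χ j * c` and of `c` differ by ninth roots of unity, on which the twisted
Frobenius is known because `(-2) ^ m ≡ 1 - 3 * m` modulo 9. -/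
lemma exists_isKummerIndex [IsAlgClosed F] (hχ : Function.Injective χ) {c : F} {m : ℕ}
    (hc0 : c ≠ 0) (hc : c ^ (-2 : ℤ) ^ m = c) : ∃ i, IsKummerIndex χ c m i := by
  obtain ⟨w, hw⟩ := IsAlgClosed.exists_pow_nat_eq c (n := 3) three_pos
  have hw0 : w ≠ 0 := by rintro rfl; exact hc0 (by simpa using hw.symm)
  obtain ⟨i, hi⟩ : ∃ i, w ^ (-2 : ℤ) ^ m = w * χ i :=
    exists_eq_mul_addChar_of_pow_three_eq hχ <| by
      rw [← zpow_natCast, zpow_comm, zpow_natCast, hw, hc]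
  refine ⟨i, fun j v hv => ?_⟩
  have hvw : (v / w) ^ 3 = χ j := by rw [div_pow, hv, hw, mul_div_cancel_right₀ _ hc0]
  have hratio := zpow_neg_two_pow_of_pow_three_eq_addChar hvw m
  rw [div_zpow, hi, div_eq_iff (mul_ne_zero hw0 (addChar_ne_zero χ i))] at hratio
  rw [hratio, sub_eq_neg_add, AddChar.map_add_eq_mul]
  field_simp

namespace IsKummerIndex

variable {c v : F} {m : ℕ} {i j : ZMod 3}

lemma zpow_iterate (h : IsKummerIndex χ c m i) (hv : v ^ 3 = χ j * c) (n : ℕ) :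
    v ^ (-2 : ℤ) ^ (m * n) = v * χ (n * (i - m * j)) := by
  induction n with
  | zero => simp
  | succ n ih =>
    have hcube : (v * χ (n * (i - m * j))) ^ 3 = χ j * c := by
      rw [mul_pow, hv, addChar_pow_three, mul_one]
    rw [Nat.mul_succ, pow_add, zpow_mul, ih, h j _ hcube, mul_assoc, ← AddChar.map_add_eq_mul]
    push_cast
    ring_nf

lemma pow_iterate_of_even (h : IsKummerIndex χ c m i) (hv : v ^ 3 = χ j * c) {n : ℕ}
    (hn : Even n) : v ^ (2 ^ m) ^ n = v * χ (n * (i - m * j)) := by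
  rw [← pow_mul, ← zpow_neg_two_pow_of_even v (hn.mul_left m), h.zpow_iterate hv]

lemma pow_pow_six (h : IsKummerIndex χ c m i) (hv : v ^ 3 = χ j * c) : v ^ (2 ^ m) ^ 6 = v := by
  rw [h.pow_iterate_of_even hv (by decide), show ((6 : ℕ) : ZMod 3) = 0 from rfl, zero_mul,
    AddChar.map_zero_eq_one, mul_one]

lemma exists_pow_pow_two_eq_self_iff [IsAlgClosed F] (h : IsKummerIndex χ c m i)
    (hχ : Function.Injective χ) (hc0 : c ≠ 0) :
    (∃ y : F, y ^ (2 ^ m) ^ 2 = y ∧ y ^ 3 = χ j * c) ↔ i = m * j := by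
  have hfixed : ∀ y : F, y ^ 3 = χ j * c → (y ^ (2 ^ m) ^ 2 = y ↔ i = m * j) := by
    intro y hy
    have hy0 : y ≠ 0 := by
      rintro rfl
      exact mul_ne_zero (addChar_ne_zero χ j) hc0 (by simpa using hy.symm)
    rw [h.pow_iterate_of_even hy (by decide), mul_eq_left₀ hy0, ← AddChar.map_zero_eq_one χ,
      hχ.eq_iff, ← sub_eq_zero (a := i)]
    generalize i - m * j = e
    decide +revert
  obtain ⟨y, hy⟩ := IsAlgClosed.exists_pow_nat_eq (χ j * c) (n := 3) three_pos
  exact ⟨fun ⟨y, hfix, hy⟩ => (hfixed y hy).1 hfix, fun hi => ⟨y, (hfixed y hy).2 hi, hy⟩⟩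

end IsKummerIndex

end CubeRoots

section AddInv

variable {F : Type*} [Field F]

lemma add_inv_eq_add_inv_iff_s4 {v w : F} (hv : v ≠ 0) (hw : w ≠ 0) :
    v + v⁻¹ = w + w⁻¹ ↔ v = w ∨ v * w = 1 := by
  rw [← sub_eq_zero, show v + v⁻¹ - (w + w⁻¹) = (v - w) * (v * w - 1) / (v * w) by
    field_simp; ring, div_eq_zero_iff, or_iff_left (mul_ne_zero hv hw), mul_eq_zero,
    sub_eq_zero, sub_eq_zero]

lemma exists_eq_add_inv [CharP F 2] [IsAlgClosed F] (x : F) : ∃ v ≠ 0, x = v + v⁻¹ := by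
  have hdeg : (X ^ 2 + C x * X + 1 : F[X]).degree = 2 := by compute_degree!
  obtain ⟨v, hv⟩ := IsAlgClosed.exists_root (X ^ 2 + C x * X + 1 : F[X]) (by simp [hdeg])
  have hv : v ^ 2 + x * v + 1 = 0 := by simpa [IsRoot] using hv
  have hv0 : v ≠ 0 := by rintro rfl; simp at hv
  refine ⟨v, hv0, ?_⟩
  field_simp
  linear_combination hv - (v ^ 2 + 1) * CharTwo.two_eq_zero (R := F)

lemma add_inv_pow_three_add [CharP F 2] {v : F} (hv : v ≠ 0) :
    (v + v⁻¹) ^ 3 + (v + v⁻¹) = v ^ 3 + (v ^ 3)⁻¹ := by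
  field_simp
  linear_combination (2 * v ^ 4 + 2 * v ^ 2) * CharTwo.two_eq_zero (R := F)

lemma exists_cube_root_of_pow_three_add [CharP F 2] [IsAlgClosed F] {x d : F} (hd : d ≠ 0)
    (h : x ^ 3 + x = d + d⁻¹) : ∃ v, v ^ 3 = d ∧ x = v + v⁻¹ := by
  obtain ⟨v, hv0, rfl⟩ := exists_eq_add_inv x
  rw [add_inv_pow_three_add hv0, add_inv_eq_add_inv_iff_s4 (pow_ne_zero 3 hv0) hd] at h
  rcases h with h | h
  · exact ⟨v, h, rfl⟩
  · exact ⟨v⁻¹, by rw [inv_pow, inv_eq_of_mul_eq_one_right h], by rw [inv_inv, add_comm]⟩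

end AddInv

section Identities

variable {R : Type*} [CommRing R] [CharP R 2] {a b A ω c c' v w x y z : R}

lemma add_mul_sq_add_one_of_mul_eq_one (h : v * w = 1) :
    (v + w) * (v + w + 1) ^ 2 = v ^ 3 + w ^ 3 := by
  linear_combination (3 * v + 3 * w + 4) * h +
    (v ^ 2 + w ^ 2 + 2 * v + 2 * w + 2) * CharTwo.two_eq_zero (R := R)

lemma mul_add_sq_add_sq_mul_add_sq (hω : ω ^ 2 = ω + 1) :
    ω * (b + ω) ^ 2 + ω ^ 2 * (b + ω ^ 2) ^ 2 = b ^ 2 := by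
  grind

lemma add_add_mul_sq_eq_mul_pow_six (hA : A = b ^ 2 + b + 1) (haA : a * A = 1) (hω : ω ^ 2 = ω + 1)
    (hvw : v * w = 1) (hv : v ^ 3 = ω * c) (hw : w ^ 3 = ω ^ 2 * c')
    (hc : A * c = (b + ω) ^ 2) (hcc' : c + c' = a) :
    (A + v + w) * ((A + v * ω + w * ω ^ 2) + b ^ 2) ^ 2 = a * b ^ 6 := by
  have hω3 : ω ^ 3 = 1 := by grind
  have hc' : A * c' = (b + ω ^ 2) ^ 2 := by grind
  have hw_sq : (b + ω) ^ 2 * w = A * ω ^ 2 * v ^ 2 := by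
    linear_combination (-w) * hc - A * ω ^ 2 * w * hv + A * ω ^ 2 * v ^ 2 * hvw - A * c * w * hω3
  have hv_sq : (b + ω ^ 2) ^ 2 * v = A * ω * w ^ 2 := by
    linear_combination (-v) * hc' - A * ω * v * hw + A * ω * w ^ 2 * hvw - A * c' * v * hω3
  have hsq : (A + v * ω + w * ω ^ 2 + b ^ 2) ^ 2 = (b + 1) ^ 2 + ω ^ 2 * v ^ 2 + ω * w ^ 2 := by
    grind
  have hb_add : (b + 1) ^ 2 + ω = (b + ω) ^ 2 := by grind
  have hb_add_sq : (b + 1) ^ 2 + ω ^ 2 = (b + ω ^ 2) ^ 2 := by grind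
  have hexpand : (A + v + w) * ((b + 1) ^ 2 + ω ^ 2 * v ^ 2 + ω * w ^ 2) =
      A * (b + 1) ^ 2 + a := by
    linear_combination w * hb_add + v * hb_add_sq + hw_sq + hv_sq + (ω * w + ω ^ 2 * v) * hvw +
      ω ^ 2 * hv + ω * hw + (c + c') * hω3 + hcc' +
      (A * ω ^ 2 * v ^ 2 + A * ω * w ^ 2) * CharTwo.two_eq_zero (R := R)
  have hb6 : A ^ 2 * (b + 1) ^ 2 + 1 = b ^ 6 := by grind
  rw [hsq, hexpand, ← hb6]
  linear_combination (-A * (b + 1) ^ 2) * haA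

/-- The polynomial left after eliminating `y` and `z` from the cyclic system
`x (y + 1)² = y (z + 1)² = z (x + 1)² = A⁻¹`, with denominators cleared. -/
def cycleNonic (A x : R) : R :=
  x * A * (A * (x + 1) ^ 4 + (1 + A * (x + 1) ^ 2) ^ 2) ^ 2 + (1 + A * (x + 1) ^ 2) ^ 4

lemma cycleNonic_eq_zero (haA : a * A = 1) (hxy : x * (y + 1) ^ 2 = a) (hyz : y * (z + 1) ^ 2 = a)
    (hzx : z * (x + 1) ^ 2 = a) : cycleNonic A x = 0 := by
  have h2 := CharTwo.two_eq_zero (R := R)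
  have hz : 1 + A * (x + 1) ^ 2 = A * (x + 1) ^ 2 * (z + 1) := by
    linear_combination -A * hzx - haA
  have hy : A * (x + 1) ^ 4 = y * (1 + A * (x + 1) ^ 2) ^ 2 := by
    rw [hz]; linear_combination (-A * (x + 1) ^ 4) * (A * hyz + haA)
  rw [cycleNonic, hy]
  linear_combination ((1 + A * (x + 1) ^ 2) ^ 4) * (A * hxy + haA + h2)

lemma prod_cubics_eq_mul_cycleNonic (hA : A = b ^ 2 + b + 1) :
    (A * (x ^ 3 + x) + 1) *
      (A * ((b ^ 2 * x + A) ^ 3 + (b ^ 2 * x + A)) + b ^ 2) *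
      (A * (((b ^ 2 + 1) * x + A) ^ 3 + ((b ^ 2 + 1) * x + A)) + (b ^ 2 + 1)) =
    (b ^ 2 + b) ^ 4 * cycleNonic A x := by
  subst hA
  unfold cycleNonic
  grind

lemma trinomial_eq_zero_iff (n : ℕ) : x ^ (2 * n + 1) + x + a = 0 ↔ x * (x ^ n + 1) ^ 2 = a := by
  rw [CharTwo.add_eq_zero, CharTwo.add_sq, one_pow, mul_add, mul_one, ← pow_mul, pow_succ',
    mul_comm n]

end Identities

section Parametrization

variable {F : Type*} [Field F]

/-- The set `Γ_ℓ` of roots of `X ^ (2 * q ^ ℓ + 1) + X + a` in `F_{q³}`, the latter being cut out of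
the ambient field by `x ^ q ^ 3 = x`. -/
def trinomialRoots (q ℓ : ℕ) (a : F) : Set F :=
  {x | x ^ q ^ 3 = x ∧ x ^ (2 * q ^ ℓ + 1) + x + a = 0}

/-- The constant term `0`, `a⁻¹`, `a⁻¹` in the numerator of the elements of `Λ_0`, `Λ_1`, `Λ_2`. -/
def rootShift (a : F) (j : ZMod 3) : F := if j = 0 then 0 else a⁻¹

/-- The denominator `1`, `b²`, `b² + 1` of the elements of `Λ_0`, `Λ_1`, `Λ_2`. -/
def rootScale (b : F) (j : ZMod 3) : F := if j = 0 then 1 else if j = 1 then b ^ 2 else b ^ 2 + 1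

/-- The element of `Λ_j` attached to a cube root `v` of `ω ^ j * c`. -/
def rootPoint (a b : F) (j : ZMod 3) (v : F) : F := (rootShift a j + v + v⁻¹) / rootScale b j

/-- The set `Λ_j`, with `χ j` in the role of `ω ^ j`. The cube roots `v` range over the whole field;
that they lie in `F_{q⁶}` is `IsKummerIndex.pow_pow_six`. -/
def lambdaSet (χ : AddChar (ZMod 3) F) (a b c : F) (j : ZMod 3) : Set F :=
  {x | ∃ v, v ^ 3 = χ j * c ∧ x = rootPoint a b j v}

/-- The relations between the parameters `a`, `b`, `c` of the trinomial and of its roots, with the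
cube roots of unity `1, ω, ω²` given as the values of an injective character `χ` of `ZMod 3`. -/
structure IsTrinomialParam (χ : AddChar (ZMod 3) F) (a b c : F) : Prop where
  injective : Function.Injective χ
  sq_ne_self : a ^ 2 ≠ a
  inv_eq : a⁻¹ = b ^ 2 + b + 1
  eq_div : c = (b + χ 1) / (b + (χ 1)⁻¹)

lemma rootPoint_zero (a b v : F) : rootPoint a b 0 v = v + v⁻¹ := by
  simp [rootPoint, rootShift, rootScale]

lemma rootPoint_one (a b v : F) : rootPoint a b 1 v = (a⁻¹ + v + v⁻¹) / b ^ 2 := by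
  simp [rootPoint, rootShift, rootScale]

lemma rootPoint_two (a b v : F) : rootPoint a b 2 v = (a⁻¹ + v + v⁻¹) / (b ^ 2 + 1) := by
  rw [rootPoint, rootShift, rootScale, if_neg (by decide), if_neg (by decide), if_neg (by decide)]

namespace IsTrinomialParam

variable {χ : AddChar (ZMod 3) F} {a b c v w : F} {m : ℕ} {i j : ZMod 3}

lemma ne_zero (h : IsTrinomialParam χ a b c) : a ≠ 0 := by
  rintro rfl
  exact h.sq_ne_self (by simp)

lemma pow_two_pow [CharP F 2] (h : IsTrinomialParam χ a b c) (hb : b ^ 2 ^ m = b) :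
    a ^ 2 ^ m = a := by
  rw [← inv_inj, ← inv_pow, h.inv_eq, add_pow_char_pow, add_pow_char_pow, pow_right_comm, hb,
    one_pow]

lemma sq_add_ne_zero (h : IsTrinomialParam χ a b c) : b ^ 2 + b ≠ 0 := by
  intro hb
  have ha : a = 1 := by rw [← inv_eq_one, h.inv_eq, hb, zero_add]
  exact h.sq_ne_self (by rw [ha, one_pow])

variable [CharP F 2]

lemma rootScale_ne_zero (h : IsTrinomialParam χ a b c) (j : ZMod 3) : rootScale b j ≠ 0 := by
  have hb : b * (b + 1) ≠ 0 := by
    rw [mul_add, mul_one, ← sq]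
    exact h.sq_add_ne_zero
  unfold rootScale
  split_ifs
  · exact one_ne_zero
  · exact pow_ne_zero 2 (left_ne_zero_of_mul hb)
  · rw [← one_pow (M := F) 2, ← CharTwo.add_sq]
    exact pow_ne_zero 2 (right_ne_zero_of_mul hb)

lemma add_mul_add_inv (h : IsTrinomialParam χ a b c) : (b + χ 1) * (b + (χ 1)⁻¹) = a⁻¹ := by
  rw [h.inv_eq, addChar_one_inv, addChar_one_sq h.injective]
  linear_combination addChar_one_sq h.injective + (b * χ 1 + χ 1) * CharTwo.two_eq_zero (R := F)

lemma param_ne_zero (h : IsTrinomialParam χ a b c) : c ≠ 0 := by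
  have hprod : (b + χ 1) * (b + (χ 1)⁻¹) ≠ 0 := h.add_mul_add_inv ▸ inv_ne_zero h.ne_zero
  rw [h.eq_div]
  exact div_ne_zero (left_ne_zero_of_mul hprod) (right_ne_zero_of_mul hprod)

lemma inv_mul_param (h : IsTrinomialParam χ a b c) : a⁻¹ * c = (b + χ 1) ^ 2 := by
  have hne : b + (χ 1)⁻¹ ≠ 0 :=
    right_ne_zero_of_mul (h.add_mul_add_inv ▸ inv_ne_zero h.ne_zero)
  rw [← h.add_mul_add_inv, h.eq_div, mul_assoc, mul_div_cancel₀ _ hne, sq]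

/-- Translating `b` by `1` exchanges `c` with `c⁻¹`, and `Λ_1` with `Λ_2`. -/
lemma symm (h : IsTrinomialParam χ a b c) : IsTrinomialParam χ a (b + 1) c⁻¹ where
  injective := h.injective
  sq_ne_self := h.sq_ne_self
  inv_eq := by rw [h.inv_eq]; linear_combination (-b - 1) * CharTwo.two_eq_zero (R := F)
  eq_div := by
    have hχ : (χ 1)⁻¹ = χ 1 + 1 := by rw [addChar_one_inv, addChar_one_sq h.injective]
    rw [h.eq_div, hχ, inv_div, add_assoc, add_comm 1, add_assoc, add_comm 1,
      CharTwo.add_cancel_right]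

lemma add_inv_param (h : IsTrinomialParam χ a b c) : c + c⁻¹ = a := by
  have hsum : a⁻¹ * (c + c⁻¹) = 1 := by
    rw [mul_add, h.inv_mul_param, h.symm.inv_mul_param, ← CharTwo.add_sq]
    linear_combination (2 * (b + χ 1) ^ 2 + 2 * (b + χ 1)) * CharTwo.two_eq_zero (R := F)
  rwa [inv_mul_eq_one₀ h.ne_zero, eq_comm] at hsum

lemma addChar_one_mul_add_inv (h : IsTrinomialParam χ a b c) :
    χ 1 * c + (χ 1 * c)⁻¹ = a * b ^ 2 := by
  rw [← inv_mul_eq_iff_eq_mul₀ h.ne_zero,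
    ← mul_add_sq_add_sq_mul_add_sq (addChar_one_sq h.injective), mul_inv, addChar_one_inv, mul_add,
    mul_left_comm, h.inv_mul_param, mul_left_comm, h.symm.inv_mul_param, addChar_one_sq h.injective]
  ring

lemma addChar_mul_param_add_inv (h : IsTrinomialParam χ a b c) (j : ZMod 3) :
    χ j * c + (χ j * c)⁻¹ = a * rootScale b j := by
  obtain rfl | rfl | rfl := eq_zero_or_one_or_two j
  · simpa [rootScale] using h.add_inv_param
  · simpa [rootScale] using h.addChar_one_mul_add_inv
  · have hsymm := h.symm.addChar_one_mul_add_inv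
    rw [mul_inv, inv_inv, CharTwo.add_sq, one_pow] at hsymm
    rw [rootScale, if_neg (by decide), if_neg (by decide), ← hsymm, addChar_two, mul_inv,
      inv_inv, add_comm]

lemma cubeRoot_ne_zero (h : IsTrinomialParam χ a b c) (hv : v ^ 3 = χ j * c) : v ≠ 0 := by
  rintro rfl
  exact mul_ne_zero (addChar_ne_zero χ j) h.param_ne_zero (by simpa using hv.symm)

lemma rootPoint_injective (h : IsTrinomialParam χ a b c) (hv : v ^ 3 = χ j * c)
    (hw : w ^ 3 = χ j * c) (hvw : rootPoint a b j v = rootPoint a b j w) : v = w := by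
  rw [rootPoint, rootPoint, div_left_inj' (h.rootScale_ne_zero j), add_assoc, add_assoc,
    add_right_inj, add_inv_eq_add_inv_iff_s4 (h.cubeRoot_ne_zero hv) (h.cubeRoot_ne_zero hw)] at hvw
  refine hvw.resolve_right fun hinv => ?_
  have hself : (χ j * c)⁻¹ = χ j * c := by
    nth_rw 1 [← hv]
    rw [← hw]
    exact inv_eq_of_mul_eq_one_right (by rw [← mul_pow, hinv, one_pow])
  have hsum := h.addChar_mul_param_add_inv j
  rw [hself, CharTwo.add_self_eq_zero] at hsum
  exact mul_ne_zero h.ne_zero (h.rootScale_ne_zero j) hsum.symm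

lemma rootPoint_one_mul_sq (h : IsTrinomialParam χ a b c) (hv : v ^ 3 = χ 1 * c) :
    rootPoint a b 1 v * (rootPoint a b 1 (v * χ 1) + 1) ^ 2 = a := by
  have hkey := add_add_mul_sq_eq_mul_pow_six h.inv_eq (mul_inv_cancel₀ h.ne_zero)
    (addChar_one_sq h.injective) (mul_inv_cancel₀ (h.cubeRoot_ne_zero hv)) hv
    (by rw [inv_pow, hv, mul_inv, addChar_one_inv]) h.inv_mul_param h.add_inv_param
  have hb : b ^ 2 ≠ 0 := by simpa [rootScale] using h.rootScale_ne_zero 1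
  have hb6 : b ^ 6 ≠ 0 := by simpa using hb
  rw [rootPoint_one, rootPoint_one, mul_inv, addChar_one_inv, div_add_one hb, div_pow,
    div_mul_div_comm, hkey, ← pow_succ', ← pow_mul, mul_div_cancel_right₀ _ hb6]

lemma rootPoint_two_eq (a b v : F) : rootPoint a b 2 v = rootPoint a (b + 1) 1 v⁻¹ := by
  rw [rootPoint_two, rootPoint_one, inv_inv, CharTwo.add_sq, one_pow, add_right_comm]

lemma rootPoint_mul_sq (h : IsTrinomialParam χ a b c) (hv : v ^ 3 = χ j * c) :
    rootPoint a b j v * (rootPoint a b j (v * χ j) + 1) ^ 2 = a := by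
  obtain rfl | rfl | rfl := eq_zero_or_one_or_two j
  · have hv0 := h.cubeRoot_ne_zero hv
    rw [AddChar.map_zero_eq_one, one_mul] at hv
    rw [AddChar.map_zero_eq_one, mul_one, rootPoint_zero,
      add_mul_sq_add_one_of_mul_eq_one (mul_inv_cancel₀ hv0), inv_pow, hv, h.add_inv_param]
  · exact h.rootPoint_one_mul_sq hv
  · rw [rootPoint_two_eq, rootPoint_two_eq, mul_inv, addChar_two, inv_inv]
    exact h.symm.rootPoint_one_mul_sq (by rw [inv_pow, hv, mul_inv, addChar_two, inv_inv])

lemma rootPoint_pow (h : IsTrinomialParam χ a b c) (hb : b ^ 2 ^ m = b)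
    (hi : IsKummerIndex χ c m i) (hv : v ^ 3 = χ j * c) (n : ℕ) :
    rootPoint a b j v ^ (2 ^ m) ^ n = rootPoint a b j (v * χ (n * (i - m * j))) := by
  have hfix {t : F} (ht : t ^ 2 ^ m = t) : t ^ 2 ^ (m * n) = t :=
    pow_mul 2 m n ▸ pow_pow_eq_self ht n
  have hb2 : (b ^ 2) ^ 2 ^ m = b ^ 2 := by rw [pow_right_comm, hb]
  have hshift : rootShift a j ^ 2 ^ m = rootShift a j := by
    unfold rootShift
    split_ifs
    · exact zero_pow (by simp)
    · rw [inv_pow, h.pow_two_pow hb]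
  have hscale : rootScale b j ^ 2 ^ m = rootScale b j := by
    unfold rootScale
    split_ifs
    · exact one_pow _
    · exact hb2
    · rw [add_pow_char_pow, hb2, one_pow]
  rw [← hi.zpow_iterate hv, rootPoint, rootPoint, ← pow_mul, div_pow, add_assoc, add_pow_char_pow,
    add_inv_pow_two_pow, hfix hshift, hfix hscale, add_assoc]

lemma rootPoint_mem_trinomialRoots_iff (h : IsTrinomialParam χ a b c) (hb : b ^ 2 ^ m = b)
    (hi : IsKummerIndex χ c m i) (hv : v ^ 3 = χ j * c) (ℓ : ℕ) :
    rootPoint a b j v ∈ trinomialRoots (2 ^ m) ℓ a ↔ ℓ * (i - m * j) = j := by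
  have hcube (e : ZMod 3) : (v * χ e) ^ 3 = χ j * c := by
    rw [mul_pow, hv, addChar_pow_three, mul_one]
  have hmul := h.rootPoint_mul_sq hv
  have hne : rootPoint a b j v ≠ 0 := left_ne_zero_of_mul (hmul ▸ h.ne_zero)
  have hfix : rootPoint a b j v ^ (2 ^ m) ^ 3 = rootPoint a b j v := by
    rw [h.rootPoint_pow hb hi hv, show ((3 : ℕ) : ZMod 3) = 0 from rfl, zero_mul,
      AddChar.map_zero_eq_one, mul_one]
  rw [trinomialRoots, Set.mem_ofPred_eq, and_iff_right hfix, trinomial_eq_zero_iff,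
    h.rootPoint_pow hb hi hv]
  constructor
  · intro hroot
    have hsq := mul_left_cancel₀ hne (hroot.trans hmul.symm)
    have hpoint := h.rootPoint_injective (hcube _) (hcube _)
      (add_right_cancel (CharTwo.sq_inj.1 hsq))
    exact h.injective (mul_left_cancel₀ (h.cubeRoot_ne_zero hv) hpoint)
  · intro hj
    rw [hj, hmul]

end IsTrinomialParam

lemma exists_cycle_of_mem_trinomialRoots [CharP F 2] {a x : F} {m ℓ : ℕ} (ha : a ^ 2 ^ m = a)
    (hx : x ∈ trinomialRoots (2 ^ m) ℓ a) :
    ∃ y z, x * (y + 1) ^ 2 = a ∧ y * (z + 1) ^ 2 = a ∧ z * (x + 1) ^ 2 = a := by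
  obtain ⟨hx3, hroot⟩ := hx
  rw [trinomial_eq_zero_iff] at hroot
  let φ : F →+* F := iterateFrobenius F 2 (m * ℓ)
  have hφ (t : F) : φ t = t ^ (2 ^ m) ^ ℓ := by rw [← pow_mul]; rfl
  have hφa : φ a = a := (hφ a).trans (pow_pow_eq_self ha ℓ)
  have hφx : φ (φ (φ x)) = x := by
    rw [hφ, hφ, hφ, ← pow_mul, ← pow_mul, ← pow_three, pow_right_comm, pow_pow_eq_self hx3]
  have hφmul {s t : F} (hst : s * (t + 1) ^ 2 = a) : φ s * (φ t + 1) ^ 2 = a := by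
    simpa only [map_mul, map_pow, map_add, map_one, hφa] using congrArg φ hst
  have hxy : x * (φ x + 1) ^ 2 = a := by rwa [hφ]
  exact ⟨φ x, φ (φ x), hxy, hφmul hxy, by simpa only [hφx] using hφmul (hφmul hxy)⟩

namespace IsTrinomialParam

variable [CharP F 2] [IsAlgClosed F]
variable {χ : AddChar (ZMod 3) F} {a b c x : F} {m : ℕ} {i j : ZMod 3}

lemma mem_lambdaSet_of_cubic (h : IsTrinomialParam χ a b c)
    (hx : a⁻¹ * ((rootScale b j * x + rootShift a j) ^ 3 + (rootScale b j * x + rootShift a j)) +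
      rootScale b j = 0) : x ∈ lambdaSet χ a b c j := by
  rw [CharTwo.add_eq_zero, inv_mul_eq_iff_eq_mul₀ h.ne_zero, ← h.addChar_mul_param_add_inv] at hx
  obtain ⟨v, hv, hxv⟩ := exists_cube_root_of_pow_three_add
    (mul_ne_zero (addChar_ne_zero χ j) h.param_ne_zero) hx
  refine ⟨v, hv, ?_⟩
  rw [rootPoint, eq_div_iff (h.rootScale_ne_zero j), add_assoc, ← hxv, mul_comm, add_comm,
    CharTwo.add_cancel_right]

lemma exists_mem_lambdaSet (h : IsTrinomialParam χ a b c) (hb : b ^ 2 ^ m = b) {ℓ : ℕ}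
    (hx : x ∈ trinomialRoots (2 ^ m) ℓ a) : ∃ j, x ∈ lambdaSet χ a b c j := by
  obtain ⟨y, z, hxy, hyz, hzx⟩ := exists_cycle_of_mem_trinomialRoots (h.pow_two_pow hb) hx
  have hprod := prod_cubics_eq_mul_cycleNonic (x := x) h.inv_eq
  rw [cycleNonic_eq_zero (mul_inv_cancel₀ h.ne_zero) hxy hyz hzx, mul_zero, mul_eq_zero,
    mul_eq_zero] at hprod
  rcases hprod with (h0 | h1) | h2
  · exact ⟨0, h.mem_lambdaSet_of_cubic (by simpa [rootScale, rootShift] using h0)⟩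
  · exact ⟨1, h.mem_lambdaSet_of_cubic (by simpa [rootScale, rootShift] using h1)⟩
  · refine ⟨2, h.mem_lambdaSet_of_cubic ?_⟩
    rwa [rootShift, rootScale, if_neg (by decide), if_neg (by decide), if_neg (by decide)]

lemma trinomialRoots_eq_iUnion (h : IsTrinomialParam χ a b c) (hb : b ^ 2 ^ m = b)
    (hi : IsKummerIndex χ c m i) (ℓ : ℕ) :
    trinomialRoots (2 ^ m) ℓ a =
      ⋃ (j : ZMod 3) (_ : ℓ * (i - m * j) = j), lambdaSet χ a b c j := by
  ext x
  simp only [Set.mem_iUnion]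
  constructor
  · intro hx
    obtain ⟨j, v, hv, rfl⟩ := h.exists_mem_lambdaSet hb hx
    exact ⟨j, (h.rootPoint_mem_trinomialRoots_iff hb hi hv ℓ).1 hx, v, hv, rfl⟩
  · rintro ⟨j, hj, v, hv, rfl⟩
    exact (h.rootPoint_mem_trinomialRoots_iff hb hi hv ℓ).2 hj

section NotDvd

variable {ℓ : ℕ} {k : ZMod 3}

lemma exists_isKummerIndex_mul (h : IsTrinomialParam χ a b c) (hb : b ^ 2 ^ m = b)
    (hm : (m : ZMod 3) ≠ 0) : ∃ k : ZMod 3, IsKummerIndex χ c m (m * k) := by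
  have hc : c ^ (-2 : ℤ) ^ m = c := by
    rw [h.eq_div, div_add_inv_zpow_neg_two_pow hb (addChar_pow_three χ 1)]
  obtain ⟨i, hi⟩ := exists_isKummerIndex h.injective h.param_ne_zero hc
  exact ⟨(m : ZMod 3)⁻¹ * i, by rwa [mul_inv_cancel_left₀ hm]⟩

lemma trinomialRoots_eq_lambdaSet_neg (h : IsTrinomialParam χ a b c) (hb : b ^ 2 ^ m = b)
    (hk : IsKummerIndex χ c m (m * k)) (hm : (m : ZMod 3) ≠ 0) (hℓ : (ℓ : ZMod 3) = m) :
    trinomialRoots (2 ^ m) ℓ a = lambdaSet χ a b c (-k) := by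
  simp only [h.trinomialRoots_eq_iUnion hb hk, hℓ, mul_mul_sub_mul_eq_iff_of_ne_zero hm,
    Set.iUnion_iUnion_eq_left]

lemma trinomialRoots_eq_union (h : IsTrinomialParam χ a b c) (hb : b ^ 2 ^ m = b)
    (hk : IsKummerIndex χ c m (m * k)) (hk0 : k = 0) (hm : (m : ZMod 3) ≠ 0)
    (hℓ : (ℓ : ZMod 3) = -m) :
    trinomialRoots (2 ^ m) ℓ a =
      lambdaSet χ a b c 0 ∪ lambdaSet χ a b c 1 ∪ lambdaSet χ a b c 2 := by
  simp only [h.trinomialRoots_eq_iUnion hb hk, hℓ, neg_mul_mul_sub_mul_eq_iff_of_ne_zero hm, hk0,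
    Set.iUnion_true, iUnion_zmod_three]

lemma trinomialRoots_eq_empty (h : IsTrinomialParam χ a b c) (hb : b ^ 2 ^ m = b)
    (hk : IsKummerIndex χ c m (m * k)) (hk0 : k ≠ 0) (hm : (m : ZMod 3) ≠ 0)
    (hℓ : (ℓ : ZMod 3) = -m) : trinomialRoots (2 ^ m) ℓ a = ∅ := by
  simp only [h.trinomialRoots_eq_iUnion hb hk, hℓ, neg_mul_mul_sub_mul_eq_iff_of_ne_zero hm, hk0,
    Set.iUnion_false, Set.iUnion_empty]

end NotDvd

end IsTrinomialParam

lemma IsKummerIndex.lambdaSet_eq {χ : AddChar (ZMod 3) F} {c : F} {m : ℕ} {i : ZMod 3}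
    (hi : IsKummerIndex χ c m i) (a b : F) (j : ZMod 3) :
    lambdaSet χ a b c j =
      {x | ∃ v, v ^ (2 ^ m) ^ 6 = v ∧ v ^ 3 = χ j * c ∧ x = rootPoint a b j v} :=
  Set.ext fun _ => exists_congr fun _ => (and_iff_right_of_imp fun hv => hi.pow_pow_six hv.1).symm

section ZModChar

variable {a b c ω : F} {m : ℕ} {i : ZMod 3} (hω3 : ω ^ 3 = 1)

lemma lambdaSet_zmodChar_zero (hi : IsKummerIndex (AddChar.zmodChar 3 hω3) c m i) :
    lambdaSet (AddChar.zmodChar 3 hω3) a b c 0 =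
      {x | ∃ v, v ^ (2 ^ m) ^ 6 = v ∧ v ^ 3 = c ∧ x = v + v⁻¹} := by
  simp only [hi.lambdaSet_eq, rootPoint_zero, AddChar.map_zero_eq_one, one_mul]

lemma lambdaSet_zmodChar_one (hi : IsKummerIndex (AddChar.zmodChar 3 hω3) c m i) :
    lambdaSet (AddChar.zmodChar 3 hω3) a b c 1 =
      {x | ∃ v, v ^ (2 ^ m) ^ 6 = v ∧ v ^ 3 = ω * c ∧ x = (a⁻¹ + v + v⁻¹) / b ^ 2} := by
  simp only [hi.lambdaSet_eq, rootPoint_one,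
    show AddChar.zmodChar 3 hω3 1 = ω from pow_one ω]

lemma lambdaSet_zmodChar_two (hi : IsKummerIndex (AddChar.zmodChar 3 hω3) c m i) :
    lambdaSet (AddChar.zmodChar 3 hω3) a b c 2 =
      {x | ∃ v, v ^ (2 ^ m) ^ 6 = v ∧ v ^ 3 = ω ^ 2 * c ∧
        x = (a⁻¹ + v + v⁻¹) / (b ^ 2 + 1)} := by
  simp only [hi.lambdaSet_eq, rootPoint_two, show AddChar.zmodChar 3 hω3 2 = ω ^ 2 from rfl]

lemma isTrinomialParam_zmodChar [CharP F 2] (ha2 : a ^ 2 ≠ a) (hω1 : ω ≠ 1)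
    (hb : b ^ 2 + b = a⁻¹ + 1) (hc : c = (b + ω) / (b + ω ^ 2)) :
    IsTrinomialParam (AddChar.zmodChar 3 hω3) a b c where
  injective := by
    have hprim := IsPrimitiveRoot.iff_orderOf.2 (orderOf_eq_prime hω3 hω1)
    exact fun i j hij => ZMod.val_injective 3 (hprim.pow_inj i.val_lt j.val_lt hij)
  sq_ne_self := ha2
  inv_eq := by rw [hb, CharTwo.add_cancel_right]
  eq_div := by
    have hχ : AddChar.zmodChar 3 hω3 1 = ω := pow_one ω
    rw [addChar_one_inv, hχ, hc]

end ZModChar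

lemma pow_three_eq_one_of_pow_four_eq_self {ω : F} (hω4 : ω ^ 4 = ω) (hω2 : ω ^ 2 ≠ ω) :
    ω ^ 3 = 1 := by
  have hω0 : ω ≠ 0 := by rintro rfl; simp at hω2
  exact mul_right_cancel₀ hω0 (by rw [← pow_succ, hω4, one_mul])

end Parametrization

theorem roots_description_m_not_div_three_general {F : Type*} [Field F] [CharP F 2] [IsAlgClosed F]
    (m ℓ : ℕ) (q : ℕ) (hq : q = 2 ^ m) (a : F) (ha2 : a ^ 2 ≠ a)
    (ω : F) (hω4 : ω ^ 4 = ω) (hω2 : ω ^ 2 ≠ ω)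
    (b : F) (hbq : b ^ q = b) (hb : b ^ 2 + b = a⁻¹ + 1)
    (c : F) (hc : c = (b + ω) / (b + ω ^ 2))
    (Γ : Set F)
    (hΓ : Γ = {x : F | x ^ q ^ 3 = x ∧ x ^ (2 * q ^ ℓ + 1) + x + a = 0})
    (Λ0 Λ1 Λ2 : Set F)
    (hΛ0 : Λ0 = {x : F | ∃ v : F, v ^ q ^ 6 = v ∧ v ^ 3 = c ∧ x = v + v⁻¹})
    (hΛ1 : Λ1 = {x : F | ∃ v : F, v ^ q ^ 6 = v ∧ v ^ 3 = ω * c ∧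
      x = (a⁻¹ + v + v⁻¹) / b ^ 2})
    (hΛ2 : Λ2 = {x : F | ∃ v : F, v ^ q ^ 6 = v ∧ v ^ 3 = ω ^ 2 * c ∧
      x = (a⁻¹ + v + v⁻¹) / (b ^ 2 + 1)})
    (hm3 : ¬ m % 3 = 0) :
    ∃ k : ℕ, k < 3 ∧ (∃ y : F, y ^ q ^ 2 = y ∧ y ^ 3 = ω ^ k * c) ∧
      (∀ j : ℕ, j < 3 → (∃ y : F, y ^ q ^ 2 = y ∧ y ^ 3 = ω ^ j * c) → j = k) ∧
      (k = 0 → ℓ % 3 = m % 3 → Γ = Λ0) ∧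
      (k ≠ 0 → ℓ % 3 = m % 3 → Γ = (if k = 1 then Λ2 else Λ1)) ∧
      (k = 0 → (ℓ + m) % 3 = 0 → Γ = Λ0 ∪ Λ1 ∪ Λ2) ∧
      (k ≠ 0 → (ℓ + m) % 3 = 0 → Γ = ∅) := by
  subst hq
  have hω3 : ω ^ 3 = 1 := pow_three_eq_one_of_pow_four_eq_self hω4 hω2
  have hω1 : ω ≠ 1 := by rintro rfl; simp at hω2
  have hm : (m : ZMod 3) ≠ 0 := by rwa [Ne, ZMod.natCast_eq_zero_iff, Nat.dvd_iff_mod_eq_zero]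
  have hparam := isTrinomialParam_zmodChar hω3 ha2 hω1 hb hc
  obtain ⟨k, hk⟩ := hparam.exists_isKummerIndex_mul hbq hm
  have hcube (j : ℕ) : (∃ y : F, y ^ (2 ^ m) ^ 2 = y ∧ y ^ 3 = ω ^ j * c) ↔ k = j := by
    rw [← AddChar.zmodChar_apply' hω3 j, hk.exists_pow_pow_two_eq_self_iff hparam.injective
      hparam.param_ne_zero, mul_right_inj' hm]
  have hsame (hℓ : ℓ % 3 = m % 3) := hparam.trinomialRoots_eq_lambdaSet_neg hbq hk hm
    ((ZMod.natCast_eq_natCast_iff' ℓ m 3).2 hℓ)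
  rw [← lambdaSet_zmodChar_zero hω3 hk] at hΛ0
  rw [← lambdaSet_zmodChar_one hω3 hk] at hΛ1
  rw [← lambdaSet_zmodChar_two hω3 hk] at hΛ2
  rw [hΓ, hΛ0, hΛ1, hΛ2]
  refine ⟨k.val, k.val_lt, (hcube _).2 k.natCast_zmod_val.symm, fun j hj hy => ?_,
    fun hk0 hℓ => (hsame hℓ).trans (by rw [(ZMod.val_eq_zero k).1 hk0, neg_zero]),
    fun hk0 hℓ => (hsame hℓ).trans ?_,
    fun hk0 hℓ => hparam.trinomialRoots_eq_union hbq hk ((ZMod.val_eq_zero k).1 hk0) hm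
      (natCast_zmod_eq_neg_iff.2 hℓ),
    fun hk0 hℓ => hparam.trinomialRoots_eq_empty hbq hk (mt (ZMod.val_eq_zero k).2 hk0) hm
      (natCast_zmod_eq_neg_iff.2 hℓ)⟩
  · rw [(hcube j).1 hy, ZMod.val_cast_of_lt hj]
  · obtain rfl | rfl | rfl := eq_zero_or_one_or_two k
    · exact absurd rfl hk0
    · rfl
    · rfl

/-- Theorem 1.3(3): the case `m ≢ 0 (mod 3)`. There is a unique `k ∈ {0,1,2}` such that
`ω^k·c` is a cube in `F_{q²}`, and `Γ_ℓ` is determined by `k` and `ℓ mod 3` as stated. -/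
theorem roots_description_m_not_div_three
    (m ℓ : ℕ) (hm : 0 < m) (hℓ : 0 < ℓ) (hℓ3 : ¬ 3 ∣ ℓ)
    (q : ℕ) (hq : q = 2 ^ m)
    (a : K) (haq : a ^ q = a) (ha2 : a ^ 2 ≠ a)
    (htr : ∑ i ∈ Finset.range m, a⁻¹ ^ 2 ^ i = (m : K))
    (ω : K) (hω4 : ω ^ 4 = ω) (hω2 : ω ^ 2 ≠ ω)
    (b : K) (hbq : b ^ q = b) (hb : b ^ 2 + b = a⁻¹ + 1)
    (c : K) (hc : c = (b + ω) / (b + ω ^ 2))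
    (Γ : Set K)
    (hΓ : Γ = {x : K | x ^ q ^ 3 = x ∧ x ^ (2 * q ^ ℓ + 1) + x + a = 0})
    (Λ0 Λ1 Λ2 : Set K)
    (hΛ0 : Λ0 = {x : K | ∃ v : K, v ^ q ^ 6 = v ∧ v ^ 3 = c ∧ x = v + v⁻¹})
    (hΛ1 : Λ1 = {x : K | ∃ v : K, v ^ q ^ 6 = v ∧ v ^ 3 = ω * c ∧
      x = (a⁻¹ + v + v⁻¹) / b ^ 2})
    (hΛ2 : Λ2 = {x : K | ∃ v : K, v ^ q ^ 6 = v ∧ v ^ 3 = ω ^ 2 * c ∧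
      x = (a⁻¹ + v + v⁻¹) / (b ^ 2 + 1)})
    (hm3 : ¬ m % 3 = 0) :
    ∃ k : ℕ, k < 3 ∧ (∃ y : K, y ^ q ^ 2 = y ∧ y ^ 3 = ω ^ k * c) ∧
      (∀ j : ℕ, j < 3 → (∃ y : K, y ^ q ^ 2 = y ∧ y ^ 3 = ω ^ j * c) → j = k) ∧
      (k = 0 → ℓ % 3 = m % 3 → Γ = Λ0) ∧
      (k ≠ 0 → ℓ % 3 = m % 3 → Γ = (if k = 1 then Λ2 else Λ1)) ∧
      (k = 0 → (ℓ + m) % 3 = 0 → Γ = Λ0 ∪ Λ1 ∪ Λ2) ∧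
      (k ≠ 0 → (ℓ + m) % 3 = 0 → Γ = ∅) := by
  exact roots_description_m_not_div_three_general m ℓ q hq a ha2 ω hω4 hω2 b hbq hb c hc Γ hΓ
    Λ0 Λ1 Λ2 hΛ0 hΛ1 hΛ2 hm3
end
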